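/- arXiv:1506.04697 — 4 statements merged into one kernel-verified Lean document; each statement's English description precedes it below -/
import Mathlib

section
/- Let R be a Dedekind domain (not a field) with fraction field K, and let M and M' be R-lattices (finitely generated torsion-free R-modules). If M ⊕ R and M' ⊕ R are isomorphic as R-modules, then M and M' are isomorphic as R-modules (the cancellation law for lattices over a Dedekind domain). -/
/-!
Composing `M ⊕ R ≅ M' ⊕ R` with the projection to `R` exhibits `M'` as the kernel of a surjection
`f = (φ, a) : M ⊕ R → R`, so it suffices to show that every such kernel is isomorphic to `M`.

If `φ x • y = φ y • x` for all `x y` (as happens when `M` has rank at most one), then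
`m ↦ (a • m, -φ m)` is an isomorphism from `M` onto `ker f`.

Otherwise both `φ` and `ker φ` are non-zero. Every ideal class contains an ideal coprime to the
non-zero ideal `φ(M)`, so some functional `χ` on `ker φ` satisfies `φ(M) + χ(ker φ) = R`. As `φ(M)`
is projective, `ker φ` is a direct summand of `M`; extending `χ` by zero to `ψ : M → R` makes
`φ + aψ` surjective, because `φ(M) + a χ(ker φ) = φ(M) + aR = R`. Three shears of `M ⊕ R` then
carry `f` to the projection onto `R`, whose kernel is `M`.
-/

open LinearMap

section CommRing

variable {R M N P : Type*} [CommRing R] [AddCommGroup M] [Module R M] [AddCommGroup N] [Module R N]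
  [AddCommGroup P] [Module R P]

/-- The kernel of the second component of an isomorphism `N ≃ M × P`, identified with the first
factor `M`. -/
noncomputable def kerSndCompEquiv (e : N ≃ₗ[R] M × P) :
    ker (snd R M P ∘ₗ e.toLinearMap) ≃ₗ[R] M :=
  e.ofSubmodule' (ker (snd R M P)) ≪≫ₗ LinearEquiv.ofEq _ _ (ker_snd R M P) ≪≫ₗ
    (LinearEquiv.ofInjective (inl R M P) inl_injective).symm

theorem range_smul_eq_span_singleton_mul (a : R) (χ : M →ₗ[R] R) :
    range (a • χ) = Ideal.span {a} * range χ := by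
  ext x
  simp [Ideal.mem_span_singleton_mul]

theorem exists_smul_eq_of_range_le_span_singleton [IsDomain R] {c : R} (hc : c ≠ 0)
    {φ : M →ₗ[R] R} (hφ : range φ ≤ Ideal.span {c}) : ∃ χ : M →ₗ[R] R, c • χ = φ := by
  let e := LinearEquiv.toSpanNonzeroSingleton R R c hc
  refine ⟨e.symm ∘ₗ φ.codRestrict (Ideal.span {c}) fun m ↦ hφ ⟨m, rfl⟩, ?_⟩
  ext m
  exact (mul_comm _ _).trans (congrArg Subtype.val (e.apply_symm_apply ⟨φ m, hφ ⟨m, rfl⟩⟩))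

theorem exists_retraction_ker_of_projective_range (φ : M →ₗ[R] N) [Module.Projective R (range φ)] :
    ∃ q : M →ₗ[R] ker φ, q ∘ₗ (ker φ).subtype = LinearMap.id := by
  have exact_ker : Function.Exact (ker φ).subtype φ.rangeRestrict :=
    LinearMap.exact_iff.2 (by simp)
  have split := exact_ker.split_tfae (ker φ).subtype_injective φ.surjective_rangeRestrict
  exact (split.out 0 1).1
    (Module.projective_lifting_property _ LinearMap.id φ.surjective_rangeRestrict)

theorem surjective_add_smul_comp_retraction {φ : M →ₗ[R] R} {a : R} {χ : ker φ →ₗ[R] R}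
    {q : M →ₗ[R] ker φ} (ha : range φ ⊔ Ideal.span {a} = ⊤) (hχ : range φ ⊔ range χ = ⊤)
    (hq : q ∘ₗ (ker φ).subtype = LinearMap.id) : Function.Surjective (φ + a • χ ∘ₗ q) := by
  have q_coe (k : ker φ) : q k = k := LinearMap.congr_fun hq k
  have range_φ_le : range φ ≤ range (φ + a • χ ∘ₗ q) := by
    rintro _ ⟨m, rfl⟩
    exact ⟨m - q m, by simp [q_coe]⟩
  have range_χ_le : range (a • χ) ≤ range (φ + a • χ ∘ₗ q) := by
    rintro _ ⟨k, rfl⟩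
    exact ⟨k, by simp [q_coe]⟩
  rw [← range_eq_top, eq_top_iff]
  calc ⊤ = range φ ⊔ range (a • χ) := by
        rw [range_smul_eq_span_singleton_mul, Ideal.sup_mul_eq_of_coprime_left ha, hχ]
    _ ≤ range (φ + a • χ ∘ₗ q) := sup_le range_φ_le range_χ_le

theorem exists_linearEquiv_snd_comp_eq_coprod {φ ψ : M →ₗ[R] R} {a : R}
    (h : Function.Surjective (φ + a • ψ)) :
    ∃ e : (M × R) ≃ₗ[R] M × R,
      snd R M R ∘ₗ e.toLinearMap = φ.coprod (toSpanSingleton R R a) := by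
  obtain ⟨m₀, hm₀⟩ := h (1 - a)
  let lowerShear (θ : M →ₗ[R] R) : (M × R) ≃ₗ[R] M × R :=
    (LinearEquiv.refl R M).skewProd (LinearEquiv.refl R R) θ
  let upperShear (m : M) : (M × R) ≃ₗ[R] M × R :=
    LinearEquiv.prodComm R M R ≪≫ₗ
      (LinearEquiv.refl R R).skewProd (LinearEquiv.refl R M) (toSpanSingleton R M m) ≪≫ₗ
      LinearEquiv.prodComm R R M
  refine ⟨lowerShear (-ψ) ≪≫ₗ upperShear (-m₀) ≪≫ₗ lowerShear (φ + a • ψ), ?_⟩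
  refine LinearMap.ext fun ⟨m, r⟩ ↦ ?_
  change r + -ψ m + (φ + a • ψ) (m + (r + -ψ m) • -m₀) = φ m + r • a
  rw [map_add, map_smul, map_neg, hm₀]
  simp only [LinearMap.add_apply, LinearMap.smul_apply, smul_eq_mul]
  ring

theorem nonempty_linearEquiv_ker_coprod_of_smul_comm {φ : M →ₗ[R] R} {a : R}
    (hφ : ∀ x y, φ x • y = φ y • x)
    (hsurj : Function.Surjective (φ.coprod (toSpanSingleton R R a))) :
    Nonempty (M ≃ₗ[R] ker (φ.coprod (toSpanSingleton R R a))) := by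
  obtain ⟨⟨n, s⟩, hns⟩ := hsurj 1
  simp only [coprod_apply, toSpanSingleton_apply, smul_eq_mul] at hns
  let toKer : M →ₗ[R] ker (φ.coprod (toSpanSingleton R R a)) :=
    ((a • LinearMap.id).prod (-φ)).codRestrict _ fun m ↦ by simp [mul_comm]
  let ofKer : ker (φ.coprod (toSpanSingleton R R a)) →ₗ[R] M :=
    (s • fst R M R - (snd R M R).smulRight n) ∘ₗ Submodule.subtype _
  have bezout_smul (m : M) : (s * a) • m + φ m • n = m := by
    rw [hφ m n, ← add_smul, add_comm, hns, one_smul]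
  refine ⟨LinearEquiv.ofLinearMap toKer ofKer ?_ ?_⟩
  · refine LinearMap.ext fun ⟨⟨m, r⟩, hmr⟩ ↦ Subtype.ext (Prod.ext ?_ ?_)
    all_goals
      simp only [mem_ker, coprod_apply, toSpanSingleton_apply, smul_eq_mul] at hmr
    · change a • (s • m - r • n) = m
      calc a • (s • m - r • n) = (s * a) • m - (r * a) • n := by module
        _ = (s * a) • m + φ m • n := by rw [eq_neg_of_add_eq_zero_right hmr]; module
        _ = m := bezout_smul m
    · change -φ (s • m - r • n) = r
      simp only [map_sub, map_smul, smul_eq_mul]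
      linear_combination r * hns - s * hmr
  · refine LinearMap.ext fun m ↦ ?_
    change s • a • m - (-φ m) • n = m
    rw [smul_smul, neg_smul, sub_neg_eq_add, bezout_smul]

end CommRing

section IsDedekindDomain

variable {R M : Type*} [CommRing R] [IsDedekindDomain R] [AddCommGroup M] [Module R M]

theorem projective_of_finite_of_isTorsionFree [Module.Finite R M] [Module.IsTorsionFree R M] :
    Module.Projective R M :=
  have := Module.finitePresentation_of_finite R M
  Module.Flat.projective_of_finitePresentation

theorem exists_span_singleton_mul_eq_and_sup_eq_top {I J : Ideal R} (hI : I ≠ ⊥) (hJ : J ≠ ⊥) :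
    ∃ (b c : R) (L : Ideal R), c ≠ 0 ∧ Ideal.span {b} * J = Ideal.span {c} * L ∧ I ⊔ L = ⊤ := by
  obtain ⟨c, hcJ, hc⟩ := Submodule.exists_mem_ne_zero_of_ne_bot hJ
  obtain ⟨J', hJ'⟩ : J ∣ Ideal.span {c} := Ideal.dvd_span_singleton.2 hcJ
  have J'_ne_bot : J' ≠ ⊥ := by
    rintro rfl
    simp [hc] at hJ'
  obtain ⟨b, hb⟩ := IsDedekindDomain.exists_sup_span_eq (Ideal.mul_le_right : I * J' ≤ J')
    (mul_ne_zero hI J'_ne_bot)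
  obtain ⟨L, hL⟩ : J' ∣ Ideal.span {b} := Ideal.dvd_iff_le.2 (le_sup_right.trans_eq hb)
  refine ⟨b, c, L, hc, by rw [hL, hJ']; ring, mul_left_cancel₀ J'_ne_bot ?_⟩
  calc J' * (I ⊔ L) = I * J' ⊔ Ideal.span {b} := by rw [Ideal.mul_sup, mul_comm, hL]
    _ = J' * ⊤ := by rw [hb, Ideal.mul_top]

theorem exists_sup_range_eq_top {I : Ideal R} (hI : I ≠ ⊥) {θ : M →ₗ[R] R} (hθ : θ ≠ 0) :
    ∃ χ : M →ₗ[R] R, I ⊔ range χ = ⊤ := by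
  obtain ⟨b, c, L, hc, hbc, hIL⟩ :=
    exists_span_singleton_mul_eq_and_sup_eq_top hI (mt range_eq_bot.1 hθ)
  rw [← range_smul_eq_span_singleton_mul] at hbc
  obtain ⟨χ, hχ⟩ := exists_smul_eq_of_range_le_span_singleton hc (hbc.trans_le Ideal.mul_le_left)
  rw [← hχ, range_smul_eq_span_singleton_mul, Ideal.span_singleton_mul_right_inj hc] at hbc
  exact ⟨χ, hbc ▸ hIL⟩

variable [Module.Projective R M]

theorem exists_surjective_add_smul {φ : M →ₗ[R] R} {a : R}
    (hsurj : Function.Surjective (φ.coprod (toSpanSingleton R R a)))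
    (hφ : φ ≠ 0) (hker : ker φ ≠ ⊥) : ∃ ψ : M →ₗ[R] R, Function.Surjective (φ + a • ψ) := by
  obtain ⟨k, hk, hk₀⟩ := Submodule.exists_mem_ne_zero_of_ne_bot hker
  obtain ⟨θ, hθ⟩ := Module.Projective.exists_dual_ne_zero R hk₀
  have θ_restrict_ne_zero : θ.domRestrict (ker φ) ≠ 0 := fun h ↦
    hθ (LinearMap.congr_fun h ⟨k, hk⟩)
  obtain ⟨χ, hχ⟩ := exists_sup_range_eq_top (mt range_eq_bot.1 hφ) θ_restrict_ne_zero
  have : Module.Projective R (range φ) := projective_of_finite_of_isTorsionFree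
  obtain ⟨q, hq⟩ := exists_retraction_ker_of_projective_range φ
  have ha : range φ ⊔ Ideal.span {a} = ⊤ := by
    rw [← range_eq_top, range_coprod, range_toSpanSingleton] at hsurj
    exact hsurj
  exact ⟨χ ∘ₗ q, surjective_add_smul_comp_retraction ha hχ hq⟩

theorem nonempty_linearEquiv_ker_of_surjective (f : M × R →ₗ[R] R) (hf : Function.Surjective f) :
    Nonempty (M ≃ₗ[R] ker f) := by
  obtain ⟨φ, a, rfl⟩ : ∃ (φ : M →ₗ[R] R) (a : R), f = φ.coprod (toSpanSingleton R R a) :=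
    ⟨f ∘ₗ inl R M R, f (0, 1), by ext <;> simp⟩
  by_cases hcomm : ∀ x y, φ x • y = φ y • x
  · exact nonempty_linearEquiv_ker_coprod_of_smul_comm hcomm hf
  · push Not at hcomm
    obtain ⟨x, y, hxy⟩ := hcomm
    have hφ : φ ≠ 0 := by
      rintro rfl
      simp at hxy
    have hker : ker φ ≠ ⊥ := (Submodule.ne_bot_iff _).2
      ⟨φ x • y - φ y • x, by simp [mul_comm], sub_ne_zero.2 hxy⟩
    obtain ⟨ψ, hψ⟩ := exists_surjective_add_smul hf hφ hker
    obtain ⟨e, he⟩ := exists_linearEquiv_snd_comp_eq_coprod hψ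
    exact he ▸ ⟨(kerSndCompEquiv e).symm⟩

end IsDedekindDomain

theorem cancellation_law_of_dedekind_lattices_general
    {R : Type*} [CommRing R] [IsDedekindDomain R]
    {M : Type*} [AddCommGroup M] [Module R M] [Module.Projective R M]
    {M' : Type*} [AddCommGroup M'] [Module R M']
    (h : Nonempty ((M × R) ≃ₗ[R] (M' × R))) : Nonempty (M ≃ₗ[R] M') := by
  obtain ⟨e⟩ := h
  have hsurj : Function.Surjective (snd R M' R ∘ₗ e.toLinearMap) :=
    (snd_surjective (R := R)).comp e.surjective
  obtain ⟨e'⟩ := nonempty_linearEquiv_ker_of_surjective _ hsurj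
  exact ⟨e' ≪≫ₗ kerSndCompEquiv e⟩

/-- **Cancellation law for lattices over a Dedekind domain.**
Let `R` be a Dedekind domain (not a field) with fraction field `K`, and let `M`, `M'` be
`R`-lattices (finitely generated torsion-free `R`-modules).  If `M ⊕ R ≅ M' ⊕ R` as
`R`-modules, then `M ≅ M'` as `R`-modules. -/
theorem cancellation_law_of_dedekind_lattices
    (R : Type*) [CommRing R] [IsDedekindDomain R] (hR : ¬ IsField R)
    (K : Type*) [Field K] [Algebra R K] [IsFractionRing R K]
    (M : Type*) [AddCommGroup M] [Module R M] [Module.Finite R M] [NoZeroSMulDivisors R M]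
    (M' : Type*) [AddCommGroup M'] [Module R M'] [Module.Finite R M'] [NoZeroSMulDivisors R M']
    (h : Nonempty ((M × R) ≃ₗ[R] (M' × R))) :
    Nonempty (M ≃ₗ[R] M') :=
  have : Module.Projective R M := projective_of_finite_of_isTorsionFree
  cancellation_law_of_dedekind_lattices_general h
end

section
/- Let R be a Dedekind domain (not a field). Every R-lattice M is projective as an R-module, and M is isomorphic to a direct sum J_1 ⊕ ⋯ ⊕ J_n of non-zero ideals J_i of R, where n is the R-rank of M. -/
open scoped TensorProduct

/-!
A non-zero finitely generated torsion-free module `M` over a domain embeds in a finite-dimensional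
vector space over the fraction field, where a functional followed by multiplication with a common
denominator gives a non-zero map `f : M → R`. Its image is a non-zero finitely generated ideal. If
such ideals are projective, then `M ≃ range f × ker f`; the kernel has rank one less than `M`, so
induction on the rank splits `M` into ideals. Projectivity of `M` is read off from the splitting.
-/

theorem nonempty_linearEquiv_range_prod_ker {R M N : Type*} [Ring R] [AddCommGroup M] [Module R M]
    [AddCommGroup N] [Module R N] (f : M →ₗ[R] N) [Module.Projective R f.range] :
    Nonempty (M ≃ₗ[R] f.range × f.ker) := by
  obtain ⟨s, hs⟩ := f.rangeRestrict.exists_rightInverse_of_surjective f.range_rangeRestrict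
  have hexact : Function.Exact f.ker.subtype f.rangeRestrict := by
    rw [LinearMap.exact_iff, LinearMap.ker_rangeRestrict, Submodule.range_subtype]
  have e := (hexact.splitSurjectiveEquiv f.ker.injective_subtype ⟨s, hs⟩).1
  exact ⟨e.trans (LinearEquiv.prodComm R _ _)⟩

theorem projective_of_linearEquiv_pi_ideal {R M ι : Type*} [CommRing R] [AddCommGroup M]
    [Module R M] [Module.Finite R M] [Finite ι]
    (hR : ∀ I : Ideal R, I.FG → Module.Projective R I) {J : ι → Ideal R}
    (e : M ≃ₗ[R] ((i : ι) → J i)) : Module.Projective R M := by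
  classical
  have := Fintype.ofFinite ι
  have projective_J (i : ι) : Module.Projective R (J i) := by
    have : Module.Finite R (J i) :=
      .of_surjective (LinearMap.proj i ∘ₗ e.toLinearMap)
        ((Function.surjective_eval i).comp e.surjective)
    exact hR (J i) (Module.Finite.iff_fg.1 this)
  exact .of_equiv' (DFinsupp.linearEquivFunOnFintype.trans e.symm)

theorem exists_dual_eq_smul_of_finite {R M : Type*} [CommRing R] [AddCommGroup M] [Module R M]
    [Module.Finite R M] (K : Type*) [CommRing K] [Algebra R K] [IsFractionRing R K]
    (g : M →ₗ[R] K) :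
    ∃ a ∈ nonZeroDivisors R, ∃ f : Module.Dual R M, ∀ x, algebraMap R K (f x) = a • g x := by
  obtain ⟨a, ha, integral⟩ :=
    FractionalIdeal.isFractional_of_fg (S := nonZeroDivisors R) (Module.Finite.fg_top.map g)
  have mem_range (x : M) : (a • g) x ∈ (Algebra.linearMap R K).range :=
    integral (g x) (Submodule.mem_map_of_mem trivial)
  let φ := LinearEquiv.ofInjective (Algebra.linearMap R K) (IsFractionRing.injective R K)
  refine ⟨a, ha, φ.symm.toLinearMap ∘ₗ (a • g).codRestrict _ mem_range, fun x ↦ ?_⟩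
  exact congrArg Subtype.val (φ.apply_symm_apply ((a • g).codRestrict _ mem_range x))

section Domain

variable {R : Type*} [CommRing R] [IsDomain R]

theorem finrank_ideal_eq_one {I : Ideal R} (hI : I ≠ ⊥) : Module.finrank R I = 1 := by
  have : Nontrivial I := Submodule.nontrivial_iff_ne_bot.2 hI
  have rank_le_one : Module.rank R I ≤ 1 := (Submodule.rank_le I).trans_eq (Module.rank_self R)
  have one_le_rank : 1 ≤ Module.rank R I := Cardinal.one_le_iff_pos.2 rank_pos
  exact Module.finrank_eq_of_rank_eq (rank_le_one.antisymm one_le_rank)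

variable {M : Type*} [AddCommGroup M] [Module R M] [Module.Finite R M]

theorem finrank_ker_add_one {f : Module.Dual R M} (hf : f ≠ 0) :
    Module.finrank R f.ker + 1 = Module.finrank R M := by
  have finrank_range : Module.finrank R f.range = 1 :=
    finrank_ideal_eq_one (mt LinearMap.range_eq_bot.1 hf)
  rw [← f.ker.finrank_quotient_add_finrank, f.quotKerEquivRange.finrank_eq, finrank_range,
    add_comm]

variable [Module.IsTorsionFree R M]

theorem exists_dual_apply_ne_zero {v : M} (hv : v ≠ 0) : ∃ f : Module.Dual R M, f v ≠ 0 := by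
  let K := FractionRing R
  have tmul_ne_zero : (1 : K) ⊗ₜ[R] v ≠ 0 := fun h ↦ by
    obtain ⟨s, hs⟩ :=
      (IsLocalizedModule.eq_zero_iff (nonZeroDivisors R) (TensorProduct.mk R K M 1)).1 h
    exact smul_ne_zero (nonZeroDivisors.coe_ne_zero s) hv hs
  obtain ⟨g, hg⟩ := Module.Projective.exists_dual_ne_zero K tmul_ne_zero
  obtain ⟨a, ha, f, hf⟩ :=
    exists_dual_eq_smul_of_finite K (g.restrictScalars R ∘ₗ TensorProduct.mk R K M 1)
  refine ⟨f, fun hfv ↦ smul_ne_zero (nonZeroDivisors.ne_zero ha) hg ?_⟩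
  calc a • g (1 ⊗ₜ v) = algebraMap R K (f v) := (hf v).symm
    _ = 0 := by rw [hfv, map_zero]

theorem exists_linearEquiv_pi_ideal (hR : ∀ I : Ideal R, I.FG → Module.Projective R I) {n : ℕ}
    (hn : Module.finrank R M = n) :
    ∃ J : Fin n → Ideal R, (∀ i, J i ≠ ⊥) ∧ Nonempty (M ≃ₗ[R] ((i : Fin n) → J i)) := by
  induction n generalizing M with
  | zero =>
    have : Subsingleton M := Module.finrank_zero_iff.1 hn
    exact ⟨Fin.elim0, fun i ↦ i.elim0, ⟨0⟩⟩
  | succ n ih =>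
    have : Nontrivial M := Module.nontrivial_of_finrank_pos (R := R) (by lia)
    obtain ⟨v, hv⟩ := exists_ne (0 : M)
    obtain ⟨f, hfv⟩ := exists_dual_apply_ne_zero (R := R) hv
    have hf : f ≠ 0 := fun h ↦ hfv (by rw [h, LinearMap.zero_apply])
    have : Module.Projective R f.range := hR _ (Module.Finite.iff_fg.1 inferInstance)
    obtain ⟨e⟩ := nonempty_linearEquiv_range_prod_ker f
    have : Module.Finite R f.ker :=
      .of_surjective (LinearMap.snd R _ _ ∘ₗ e.toLinearMap) (Prod.snd_surjective.comp e.surjective)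
    obtain ⟨J, hJ, ⟨e_ker⟩⟩ := ih (M := f.ker) (by have := finrank_ker_add_one hf; lia)
    let J' : Fin (n + 1) → Ideal R := Fin.cons f.range J
    exact ⟨J', Fin.cases (mt LinearMap.range_eq_bot.1 hf) hJ,
      ⟨e ≪≫ₗ (LinearEquiv.refl R _).prodCongr e_ker ≪≫ₗ Fin.consLinearEquiv R (fun i ↦ J' i)⟩⟩

end Domain

theorem ideal_projective_of_isDedekindDomain {R : Type*} [CommRing R] [IsDedekindDomain R]
    (I : Ideal R) : Module.Projective R I :=
  have := Module.finitePresentation_of_finite R I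
  Module.Flat.projective_of_finitePresentation

/-- The hypothesis `hR` says that the domain `R` is a Prüfer domain. -/
theorem lattice_projective_and_direct_sum_of_ideals_general
    (R : Type*) [CommRing R] [IsDomain R] (hR : ∀ I : Ideal R, I.FG → Module.Projective R I)
    (K : Type*) [Field K] [Algebra R K] [IsFractionRing R K]
    (M : Type*) [AddCommGroup M] [Module R M] [Module.Finite R M] [Module.IsTorsionFree R M] :
    Module.Projective R M ∧
      ∃ (n : ℕ) (J : Fin n → Ideal R),
        (∀ i, J i ≠ ⊥) ∧
        Nonempty (M ≃ₗ[R] ((i : Fin n) → ↥(J i))) ∧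
        n = Module.finrank K (K ⊗[R] M) := by
  have finrank_eq : Module.finrank K (K ⊗[R] M) = Module.finrank R M :=
    (TensorProduct.isBaseChange R M K).finrank_eq
  obtain ⟨J, hJ, ⟨e⟩⟩ := exists_linearEquiv_pi_ideal hR finrank_eq.symm
  exact ⟨projective_of_linearEquiv_pi_ideal hR e, _, J, hJ, ⟨e⟩, rfl⟩

/-- **Steinitz's theorem, existence part.**
Let `R` be a Dedekind domain (not a field) with fraction field `K`.  Every `R`-lattice `M`
(finitely generated torsion-free `R`-module) is projective as an `R`-module, and `M` is
isomorphic to a direct sum `J 0 ⊕ ⋯ ⊕ J (n-1)` of non-zero ideals of `R`, where `n` is the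
`R`-rank of `M`, i.e. the dimension over `K` of `K ⊗[R] M`. -/
theorem lattice_projective_and_direct_sum_of_ideals
    (R : Type*) [CommRing R] [IsDedekindDomain R] (hR : ¬ IsField R)
    (K : Type*) [Field K] [Algebra R K] [IsFractionRing R K]
    (M : Type*) [AddCommGroup M] [Module R M] [Module.Finite R M] [NoZeroSMulDivisors R M] :
    Module.Projective R M ∧
      ∃ (n : ℕ) (J : Fin n → Ideal R),
        (∀ i, J i ≠ ⊥) ∧
        Nonempty (M ≃ₗ[R] ((i : Fin n) → ↥(J i))) ∧
        n = Module.finrank K (K ⊗[R] M) :=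
  lattice_projective_and_direct_sum_of_ideals_general R
    (fun I _ ↦ ideal_projective_of_isDedekindDomain I) K M
end

section
/- Let R be a Dedekind domain (not a field). Two R-lattices M = J_1 ⊕ ⋯ ⊕ J_n and M' = J'_1 ⊕ ⋯ ⊕ J'_m, with all J_i and J'_j non-zero ideals of R, are isomorphic as R-modules if and only if n = m and the product ideals J_1⋯J_n and J'_1⋯J'_n are isomorphic as R-modules. -/
/-!
An isomorphism `⨁ J i ≃ ⨁ J' j` extends to a `K`-linear isomorphism `Kⁿ ≃ Kᵐ` over the fraction
field `K`, so `n = m`. Expanding determinants shows that multiplication by its determinant carries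
`∏ J i` into `∏ J' i`, and the inverse isomorphism shows that it does so onto.

Conversely, over a Dedekind domain an ideal `I` can be rescaled to be coprime to a given `J`. For
coprime ideals the sequence `0 → I * J → I × J → R → 0` is exact and splits, so
`I × J ≃ (I * J) × R`. By induction, `⨁ J i ≃ (∏ J i) × Rⁿ⁻¹` depends only on `n` and on the
isomorphism class of `∏ J i`.
-/

namespace Steinitz

open IsLocalization (coeSubmodule mem_coeSubmodule)
open scoped Pointwise nonZeroDivisors

section ProductsOfSubmodules

variable {R A ι : Type*} [CommSemiring R] [CommSemiring A] [Algebra R A] [Fintype ι]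

theorem prod_eq_span_prod (N : ι → Submodule R A) :
    ∏ i, N i = Submodule.span R (∏ i, (N i : Set A)) := by
  simp only [← Submodule.prod_span, Submodule.span_eq]

theorem prod_mem_prod {N : ι → Submodule R A} {x : ι → A} (hx : ∀ i, x i ∈ N i) :
    ∏ i, x i ∈ ∏ i, N i := by
  rw [prod_eq_span_prod]
  exact Submodule.subset_span ((Set.mem_fintype_prod _ _).mpr ⟨x, hx, rfl⟩)

end ProductsOfSubmodules

section Determinants

variable {R A ι : Type*} [CommRing R] [CommRing A] [Algebra R A] [Fintype ι]

theorem det_mem_prod [DecidableEq ι] {N : ι → Submodule R A} {M : Matrix ι ι A}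
    (hM : ∀ i j, M i j ∈ N i) : M.det ∈ ∏ i, N i := by
  rw [← Matrix.det_transpose, Matrix.det_apply]
  exact Submodule.sum_mem _ fun σ _ ↦
    Submodule.smul_of_tower_mem _ _ (prod_mem_prod fun i ↦ hM i (σ i))

theorem det_smul_prod_le {N N' : ι → Submodule R A} {g : (ι → A) →ₗ[A] (ι → A)}
    (hg : ∀ x, (∀ i, x i ∈ N i) → ∀ i, g x i ∈ N' i) :
    LinearMap.det g • ∏ i, N i ≤ ∏ i, N' i := by
  classical
  rw [prod_eq_span_prod N, Submodule.smul_span, Submodule.span_le]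
  rintro _ ⟨_, hx, rfl⟩
  obtain ⟨x, hxN, rfl⟩ := (Set.mem_fintype_prod _ _).mp hx
  have det_mul_prod : LinearMap.det g * ∏ i, x i =
      (Matrix.of fun i j ↦ g (Pi.single j (x j)) i).det := by
    rw [← LinearMap.det_toMatrix', mul_comm, ← Matrix.det_mul_row]
    congr! with i j
    rw [LinearMap.toMatrix'_apply, ← smul_eq_mul, ← Pi.smul_apply, ← map_smul, ← Pi.single_smul]
    simp
  change LinearMap.det g * ∏ i, x i ∈ ∏ i, N' i
  rw [det_mul_prod]
  refine det_mem_prod fun i j ↦ hg _ (fun k ↦ ?_) i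
  obtain rfl | hkj := eq_or_ne k j
  · simpa using hxN k
  · simp [hkj]

theorem det_smul_prod_eq {N N' : ι → Submodule R A} {g : (ι → A) ≃ₗ[A] (ι → A)}
    (hg : ∀ x, (∀ i, x i ∈ N i) ↔ ∀ i, g x i ∈ N' i) :
    LinearMap.det (g : (ι → A) →ₗ[A] (ι → A)) • ∏ i, N i = ∏ i, N' i := by
  refine le_antisymm (det_smul_prod_le fun x ↦ (hg x).mp) ?_
  have det_symm_smul_prod_le :
      LinearMap.det (g.symm : (ι → A) →ₗ[A] (ι → A)) • ∏ i, N' i ≤ ∏ i, N i :=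
    det_smul_prod_le fun x hx ↦ (hg _).mpr (by simpa using hx)
  calc ∏ i, N' i
      = LinearMap.det (g : (ι → A) →ₗ[A] (ι → A)) •
          LinearMap.det (g.symm : (ι → A) →ₗ[A] (ι → A)) • ∏ i, N' i := by
        rw [smul_smul, g.det_mul_det_symm, one_smul]
    _ ≤ LinearMap.det (g : (ι → A) →ₗ[A] (ι → A)) • ∏ i, N i :=
        Submodule.map_mono det_symm_smul_prod_le

theorem coeSubmodule_prod (J : ι → Ideal R) :
    coeSubmodule A (∏ i, J i) = ∏ i, coeSubmodule A (J i) :=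
  map_prod (Submodule.mapHom (Algebra.ofId R A)) J Finset.univ

end Determinants

/-- Multiplication by a regular element `a`, as an isomorphism from a submodule onto its pointwise
multiple. -/
noncomputable def linearEquivSMul {R α M : Type*} [Semiring R] [Monoid α] [AddCommMonoid M]
    [Module R M] [DistribMulAction α M] [SMulCommClass α R M] {a : α} (ha : IsSMulRegular M a)
    (N : Submodule R M) : N ≃ₗ[R] (a • N : Submodule R M) :=
  Submodule.equivMapOfInjective (DistribSMul.toLinearMap R M a) ha N

section PiInclusion

variable {R : Type*} [CommRing R] (K : Type*) [CommRing K] [Algebra R K] {ι : Type*}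

/-- The coordinatewise map of the product of the ideals `J i` into `ι → K`, for an `R`-algebra `K`.
For finite `ι` the source is the direct sum of the `J i`. -/
def piInclusion (J : ι → Ideal R) : (∀ i, J i) →ₗ[R] ι → K :=
  .pi fun i ↦ (Algebra.linearMap R K ∘ₗ (J i).subtype) ∘ₗ .proj i

variable {K}

theorem mem_range_piInclusion {J : ι → Ideal R} {x : ι → K} :
    x ∈ (piInclusion K J).range ↔ ∀ i, x i ∈ coeSubmodule K (J i) := by
  simp only [mem_coeSubmodule]
  constructor
  · rintro ⟨y, rfl⟩ i
    exact ⟨y i, (y i).2, rfl⟩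
  · intro hx
    choose y hyJ hyx using hx
    exact ⟨fun i ↦ ⟨y i, hyJ i⟩, funext hyx⟩

end PiInclusion

section FractionField

variable {R : Type*} [CommRing R] [IsDomain R] (K : Type*) [Field K] [Algebra R K]
  [IsFractionRing R K] {ι κ : Type*}

theorem isLocalizedModule_ideal {I : Ideal R} (hI : I ≠ ⊥) :
    IsLocalizedModule R⁰ (Algebra.linearMap R K ∘ₗ I.subtype) where
  map_units := IsLocalizedModule.map_units (Algebra.linearMap R K)
  surj y := by
    obtain ⟨a, haI, ha⟩ := Submodule.exists_mem_ne_zero_of_ne_bot hI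
    obtain ⟨⟨r, s⟩, hrs⟩ := IsLocalization.surj R⁰ y
    refine ⟨(⟨r * a, I.mul_mem_left r haI⟩, s * ⟨a, mem_nonZeroDivisors_of_ne_zero ha⟩), ?_⟩
    simp only [Submonoid.smul_def, Algebra.smul_def, Submonoid.coe_mul, map_mul,
      LinearMap.comp_apply, Submodule.subtype_apply, Algebra.linearMap_apply, ← hrs]
    ring
  exists_of_eq h := ⟨1, by simpa using h⟩

theorem isLocalizedModule_piInclusion [Finite ι] {J : ι → Ideal R} (hJ : ∀ i, J i ≠ ⊥) :
    IsLocalizedModule R⁰ (piInclusion K J) :=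
  have (i : ι) := isLocalizedModule_ideal K (hJ i)
  IsLocalizedModule.pi R⁰ _

theorem exists_linearEquiv_extending [Finite ι] [Finite κ] {J : ι → Ideal R} {J' : κ → Ideal R}
    (hJ : ∀ i, J i ≠ ⊥) (hJ' : ∀ i, J' i ≠ ⊥) (φ : (∀ i, J i) ≃ₗ[R] ∀ i, J' i) :
    ∃ g : (ι → K) ≃ₗ[K] (κ → K), ∀ x, g (piInclusion K J x) = piInclusion K J' (φ x) := by
  have := isLocalizedModule_piInclusion K hJ
  have := isLocalizedModule_piInclusion K hJ'
  exact ⟨IsLocalizedModule.mapEquiv R⁰ (piInclusion K J) (piInclusion K J') K φ, by simp⟩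

end FractionField

section Invariants

variable {R : Type*} [CommRing R] [IsDomain R] {ι κ : Type*} [Fintype ι] [Fintype κ]

theorem card_eq_of_pi_linearEquiv {J : ι → Ideal R} {J' : κ → Ideal R} (hJ : ∀ i, J i ≠ ⊥)
    (hJ' : ∀ i, J' i ≠ ⊥) (φ : (∀ i, J i) ≃ₗ[R] ∀ i, J' i) :
    Fintype.card ι = Fintype.card κ :=
  have ⟨g, _⟩ := exists_linearEquiv_extending (FractionRing R) hJ hJ' φ
  card_eq_of_linearEquiv (FractionRing R) g

theorem nonempty_prod_linearEquiv_of_pi_linearEquiv {J J' : ι → Ideal R} (hJ : ∀ i, J i ≠ ⊥)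
    (hJ' : ∀ i, J' i ≠ ⊥) (φ : (∀ i, J i) ≃ₗ[R] ∀ i, J' i) :
    Nonempty (↥(∏ i, J i) ≃ₗ[R] ↥(∏ i, J' i)) := by
  let K := FractionRing R
  obtain ⟨g, hgφ⟩ := exists_linearEquiv_extending K hJ hJ' φ
  have mem_iff (x : ι → K) :
      (∀ i, x i ∈ coeSubmodule K (J i)) ↔ ∀ i, g x i ∈ coeSubmodule K (J' i) := by
    rw [← mem_range_piInclusion, ← mem_range_piInclusion]
    constructor
    · rintro ⟨y, rfl⟩
      exact ⟨φ y, (hgφ y).symm⟩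
    · rintro ⟨y, hy⟩
      exact ⟨φ.symm y, g.injective (by rw [hgφ, φ.apply_symm_apply, hy])⟩
  have det_smul_eq : LinearMap.det (g : (ι → K) →ₗ[K] (ι → K)) • coeSubmodule K (∏ i, J i) =
      coeSubmodule K (∏ i, J' i) := by
    simpa only [coeSubmodule_prod] using det_smul_prod_eq mem_iff
  have algebraMap_injective : Function.Injective (Algebra.linearMap R K) :=
    IsFractionRing.injective R K
  exact ⟨Submodule.equivMapOfInjective _ algebraMap_injective _ ≪≫ₗ
    linearEquivSMul (g.isUnit_det'.isSMulRegular K) _ ≪≫ₗ .ofEq _ _ det_smul_eq ≪≫ₗ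
    (Submodule.equivMapOfInjective _ algebraMap_injective _).symm⟩

end Invariants

section Ideals

variable {R : Type*} [CommRing R] {I I' J : Ideal R}

theorem nonempty_linearEquiv_of_span_singleton_mul_eq {a b : R} (ha : a ∈ R⁰) (hb : b ∈ R⁰)
    (h : Ideal.span {a} * I = Ideal.span {b} * I') : Nonempty (I ≃ₗ[R] I') := by
  have smul_eq : a • I = b • I' := by
    simpa only [← Submodule.ideal_span_singleton_smul, smul_eq_mul] using h
  have isSMulRegular {c : R} (hc : c ∈ R⁰) : IsSMulRegular R c :=
    (isRegular_iff_mem_nonZeroDivisors.mpr hc).left.isSMulRegular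
  exact ⟨linearEquivSMul (isSMulRegular ha) I ≪≫ₗ .ofEq _ _ smul_eq ≪≫ₗ
    (linearEquivSMul (isSMulRegular hb) I').symm⟩

theorem nonempty_prod_linearEquiv_of_isCoprime (h : IsCoprime I J) :
    Nonempty ((I × J) ≃ₗ[R] ↥(I * J) × R) := by
  obtain ⟨x, hx, y, hy, hxy⟩ := Ideal.isCoprime_iff_exists.mp h
  exact ⟨{
    toFun p := (⟨p.1 * y - x * p.2,
      sub_mem (Ideal.mul_mem_mul p.1.2 hy) (Ideal.mul_mem_mul hx p.2.2)⟩, p.1 + p.2)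
    invFun q := (⟨q.2 * x + q.1, add_mem (I.mul_mem_left _ hx) (Ideal.mul_le_left q.1.2)⟩,
      ⟨q.2 * y - q.1, sub_mem (J.mul_mem_left _ hy) (Ideal.mul_le_right q.1.2)⟩)
    map_add' p q := by ext <;> simp <;> ring
    map_smul' r p := by ext <;> simp <;> ring
    left_inv p := by
      ext
      · linear_combination (p.1 : R) * hxy
      · linear_combination (p.2 : R) * hxy
    right_inv q := by
      ext
      · linear_combination (q.1 : R) * hxy
      · linear_combination q.2 * hxy }⟩

end Ideals

section Dedekind

variable {R : Type*} [CommRing R] [IsDedekindDomain R]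

theorem exists_isCoprime_span_singleton_mul_eq {I J : Ideal R} (hI : I ≠ ⊥) (hJ : J ≠ ⊥) :
    ∃ I', IsCoprime I' J ∧
      ∃ a ∈ R⁰, ∃ b ∈ R⁰, Ideal.span {a} * I = Ideal.span {b} * I' := by
  obtain rfl | hJ_top := eq_or_ne J ⊤
  · exact ⟨I, Ideal.isCoprime_iff_sup_eq.mpr (sup_top_eq I), 1, one_mem _, 1, one_mem _, rfl⟩
  obtain ⟨b, hbI, hb⟩ := Submodule.exists_mem_ne_zero_of_ne_bot hI
  obtain ⟨C, hIC⟩ := Ideal.dvd_span_singleton.mpr hbI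
  have hC : C ≠ 0 := by
    rintro rfl
    simp [hb] at hIC
  -- If `C` represents the inverse class of `I` and `C = C * J + (a)`, then `a * C⁻¹` is integral,
  -- coprime to `J`, and in the class of `I`.
  obtain ⟨a, ha_sup⟩ :=
    IsDedekindDomain.exists_sup_span_eq (Ideal.mul_le_left : C * J ≤ C) (mul_ne_zero hC hJ)
  have ha : a ≠ 0 := by
    rintro rfl
    exact hJ_top (mul_left_cancel₀ hC (by simpa using ha_sup))
  have haC : a ∈ C := ha_sup ▸ Ideal.mem_sup_right (Ideal.mem_span_singleton_self a)
  obtain ⟨I', hCI'⟩ := Ideal.dvd_span_singleton.mpr haC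
  refine ⟨I', ?_, a, mem_nonZeroDivisors_of_ne_zero ha, b, mem_nonZeroDivisors_of_ne_zero hb, ?_⟩
  · rw [Ideal.isCoprime_iff_sup_eq]
    apply mul_left_cancel₀ hC
    rw [Ideal.mul_sup, ← hCI', sup_comm, ha_sup, Ideal.mul_top]
  · rw [hCI', hIC]
    ring

theorem nonempty_prod_linearEquiv {I J : Ideal R} (hI : I ≠ ⊥) (hJ : J ≠ ⊥) :
    Nonempty ((I × J) ≃ₗ[R] ↥(I * J) × R) := by
  obtain ⟨I', hI'J, a, ha, b, hb, hab⟩ := exists_isCoprime_span_singleton_mul_eq hI hJ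
  obtain ⟨eI⟩ := nonempty_linearEquiv_of_span_singleton_mul_eq ha hb hab
  obtain ⟨eIJ⟩ : Nonempty (↥(I * J) ≃ₗ[R] ↥(I' * J)) :=
    nonempty_linearEquiv_of_span_singleton_mul_eq ha hb (by rw [← mul_assoc, hab, mul_assoc])
  obtain ⟨e⟩ := nonempty_prod_linearEquiv_of_isCoprime hI'J
  exact ⟨eI.prodCongr (.refl R J) ≪≫ₗ e ≪≫ₗ eIJ.symm.prodCongr (.refl R R)⟩

theorem nonempty_pi_fin_linearEquiv {n : ℕ} {J : Fin (n + 1) → Ideal R} (hJ : ∀ i, J i ≠ ⊥) :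
    Nonempty ((∀ i, J i) ≃ₗ[R] ↥(∏ i, J i) × (Fin n → R)) := by
  induction n with
  | zero =>
    have prod_eq : J 0 = ∏ i, J i := (Fin.prod_univ_one J).symm
    exact ⟨.piUnique (α := Fin 1) R (fun i ↦ J i) ≪≫ₗ .ofEq _ _ prod_eq ≪≫ₗ .symm .prodUnique⟩
  | succ n ih =>
    obtain ⟨eTail⟩ := ih fun i ↦ hJ i.succ
    have prod_tail_ne_bot : ∏ i : Fin (n + 1), J i.succ ≠ ⊥ :=
      Finset.prod_ne_zero_iff.mpr fun i _ ↦ hJ i.succ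
    obtain ⟨eProd⟩ := nonempty_prod_linearEquiv (hJ 0) prod_tail_ne_bot
    exact ⟨(Fin.consLinearEquiv R fun i ↦ J i).symm ≪≫ₗ
      (LinearEquiv.refl R (J 0)).prodCongr eTail ≪≫ₗ
      (LinearEquiv.prodAssoc R _ _ _).symm ≪≫ₗ
      eProd.prodCongr (.refl R _) ≪≫ₗ
      LinearEquiv.prodAssoc R _ _ _ ≪≫ₗ
      (LinearEquiv.ofEq _ _ (Fin.prod_univ_succ J).symm).prodCongr
        (Fin.consLinearEquiv R fun _ ↦ R)⟩

variable {ι : Type*} [Fintype ι]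

theorem nonempty_pi_linearEquiv {n : ℕ} (hn : Fintype.card ι = n + 1) {J : ι → Ideal R}
    (hJ : ∀ i, J i ≠ ⊥) : Nonempty ((∀ i, J i) ≃ₗ[R] ↥(∏ i, J i) × (Fin n → R)) := by
  let σ := (Fintype.equivFinOfCardEq hn).symm
  obtain ⟨e⟩ := nonempty_pi_fin_linearEquiv fun i ↦ hJ (σ i)
  exact ⟨(LinearEquiv.piCongrLeft R (fun i ↦ J i) σ).symm ≪≫ₗ e ≪≫ₗ
    (LinearEquiv.ofEq _ _ (σ.prod_comp J)).prodCongr (.refl R _)⟩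

theorem nonempty_pi_linearEquiv_of_prod_linearEquiv {J J' : ι → Ideal R} (hJ : ∀ i, J i ≠ ⊥)
    (hJ' : ∀ i, J' i ≠ ⊥) (e : ↥(∏ i, J i) ≃ₗ[R] ↥(∏ i, J' i)) :
    Nonempty ((∀ i, J i) ≃ₗ[R] ∀ i, J' i) := by
  rcases hn : Fintype.card ι with _ | n
  · have := Fintype.card_eq_zero_iff.mp hn
    exact ⟨.ofSubsingleton _ _⟩
  · obtain ⟨eJ⟩ := nonempty_pi_linearEquiv hn hJ
    obtain ⟨eJ'⟩ := nonempty_pi_linearEquiv hn hJ'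
    exact ⟨eJ ≪≫ₗ e.prodCongr (.refl R _) ≪≫ₗ eJ'.symm⟩

end Dedekind

end Steinitz

/-- **Steinitz's theorem, uniqueness part.**
Let `R` be a Dedekind domain (not a field).  Two `R`-lattices `M = J 0 ⊕ ⋯ ⊕ J (n-1)` and
`M' = J' 0 ⊕ ⋯ ⊕ J' (m-1)`, where all `J i` and `J' i` are non-zero ideals of `R`, are
isomorphic as `R`-modules if and only if `n = m` and the product ideals `J 0 ⋯ J (n-1)` and
`J' 0 ⋯ J' (m-1)` are isomorphic as `R`-modules. -/
theorem direct_sums_of_ideals_isomorphic_iff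
    (R : Type*) [CommRing R] [IsDedekindDomain R] (hR : ¬ IsField R)
    (n m : ℕ) (J : Fin n → Ideal R) (J' : Fin m → Ideal R)
    (hJ : ∀ i, J i ≠ ⊥) (hJ' : ∀ i, J' i ≠ ⊥) :
    Nonempty (((i : Fin n) → ↥(J i)) ≃ₗ[R] ((i : Fin m) → ↥(J' i))) ↔
      n = m ∧ Nonempty (↥(∏ i, J i) ≃ₗ[R] ↥(∏ i, J' i)) := by
  constructor
  · rintro ⟨φ⟩
    obtain rfl : n = m := by simpa using Steinitz.card_eq_of_pi_linearEquiv hJ hJ' φ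
    exact ⟨rfl, Steinitz.nonempty_prod_linearEquiv_of_pi_linearEquiv hJ hJ' φ⟩
  · rintro ⟨rfl, ⟨e⟩⟩
    exact Steinitz.nonempty_pi_linearEquiv_of_prod_linearEquiv hJ hJ' e
end

section
/- Let K be a global field, R the ring of S-integers of K for a finite set S of places containing all archimedean ones, A a finite-dimensional separable K-algebra, and Λ an R-order in A. Then the set LF_1(Λ) of isomorphism classes of locally free right Λ-ideals in A is finite. -/
open scoped TensorProduct
open IsDedekindDomain

noncomputable section

/-- A field `K` is a *global field* if it is a number field (finite extension of `ℚ`) or a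
global function field (finite separable extension of `𝔽_p(t)` for some prime `p` and some
element `t` transcendental over the prime field `𝔽_p`; `𝔽_p(t)` is realised as the subfield
`Subfield.closure {t}` generated by `t`, and transcendence of `t` as infiniteness of this
subfield). -/
def IsGlobalField (K : Type*) [Field K] : Prop :=
  NumberField K ∨
    ∃ (p : ℕ) (t : K), p.Prime ∧ CharP K p ∧
      Infinite ↥(Subfield.closure ({t} : Set K)) ∧
      Module.Finite ↥(Subfield.closure ({t} : Set K)) K ∧
      Algebra.IsSeparable ↥(Subfield.closure ({t} : Set K)) K


/-- A `K`-algebra is *separable* if it remains semisimple after base change to an algebraic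
closure of `K` (equivalently, it is semisimple with centre a product of finite separable
field extensions of `K`). -/
def IsSeparableAlgebra (K : Type*) [Field K] (A : Type*) [Ring A] [Algebra K A] : Prop :=
  IsSemisimpleRing ((AlgebraicClosure K) ⊗[K] A)

variable (R : Type*) [CommRing R] [IsDedekindDomain R]
variable (K : Type*) [Field K] [Algebra R K] [IsFractionRing R K]
variable (A : Type*) [Ring A] [Algebra K A] [FiniteDimensional K A]
variable [Algebra R A] [IsScalarTower R K A]

/-- An `R`-order in the `K`-algebra `A`: an `R`-subring of `A` which is finitely generated
as an `R`-module and spans `A` over `K`. -/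
def IsROrder (Λ : Subalgebra R A) : Prop :=
  Module.Finite R ↥Λ ∧ Submodule.span K (Λ : Set A) = ⊤

/-- The completion `A_v = K_v ⊗[K] A` of `A` at a finite place (height-one prime) `v` of `R`. -/
def PlaceAlgebra (v : HeightOneSpectrum R) : Type _ := v.adicCompletion K ⊗[K] A

instance (v : HeightOneSpectrum R) : Ring (PlaceAlgebra R K A v) :=
  inferInstanceAs (Ring (v.adicCompletion K ⊗[K] A))

/-- The canonical identification of `K_v ⊗[K] A` with the completed algebra `A_v`. -/
def PlaceAlgebra.of (v : HeightOneSpectrum R) (z : v.adicCompletion K ⊗[K] A) :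
    PlaceAlgebra R K A v := z

/-- The completed order `Λ_v = R_v ⊗[R] Λ`, realised as the subring of `A_v` generated by
the valuation integers `O_v` of `K_v` and by (the image of) `Λ`; this is exactly the
`O_v`-span of the image of `Λ`. -/
def orderAt (Λ : Subalgebra R A) (v : HeightOneSpectrum R) : Subring (PlaceAlgebra R K A v) :=
  Subring.closure
    ((fun c : v.adicCompletion K => PlaceAlgebra.of R K A v (c ⊗ₜ[K] (1 : A))) ''
        (v.adicCompletionIntegers K : Set (v.adicCompletion K)) ∪
      (fun a : A => PlaceAlgebra.of R K A v ((1 : v.adicCompletion K) ⊗ₜ[K] a)) '' (Λ : Set A))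

/-- The completed lattice `J_v = R_v ⊗[R] J ⊆ A_v`, the `O_v`-span of the image of `J`. -/
def latticeAt (J : Submodule R A) (v : HeightOneSpectrum R) :
    AddSubgroup (PlaceAlgebra R K A v) :=
  AddSubgroup.closure
    {z | ∃ c ∈ (v.adicCompletionIntegers K : Set (v.adicCompletion K)),
      ∃ x ∈ J, z = PlaceAlgebra.of R K A v (c ⊗ₜ[K] x)}

/-- A *locally free (right) `Λ`-ideal* in `A`: a full `R`-lattice `J` in `A` (a finitely
generated `R`-submodule spanning `A` over `K`) which is a right `Λ`-module and whose
completion at every finite place `v` is a free `Λ_v`-module of rank one, i.e.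
`J_v = u ⬝ Λ_v` for some unit `u` of `A_v`. -/
structure LocallyFreeIdeal (Λ : Subalgebra R A) where
  carrier : Submodule R A
  fg : carrier.FG
  spans : Submodule.span K (carrier : Set A) = ⊤
  right_mul : ∀ x ∈ carrier, ∀ a ∈ Λ, x * a ∈ carrier
  locallyFree : ∀ v : HeightOneSpectrum R, ∃ u : (PlaceAlgebra R K A v)ˣ,
      (latticeAt R K A carrier v : Set (PlaceAlgebra R K A v)) =
        (fun y : PlaceAlgebra R K A v => u.val * y) ''
          (orderAt R K A Λ v : Set (PlaceAlgebra R K A v))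

variable {R K A}

/-- A right `Λ`-module isomorphism between additive subgroups of `Fin m → A` which are stable
under the diagonal right multiplication by elements of `Λ`: an additive equivalence commuting
with right multiplication by every element of `Λ`. -/
def RightLamIso (Λ : Subalgebra R A) {m : ℕ} (P Q : AddSubgroup (Fin m → A)) : Prop :=
  ∃ e : P ≃+ Q, ∀ (z : P) (a : A), a ∈ Λ →
    ∀ h : (fun i => z.val i * a) ∈ P,
      (e ⟨fun i => z.val i * a, h⟩).val = fun i => (e z).val i * a

/-- The external direct sum `M 0 ⊕ ⋯ ⊕ M (m-1)` of `R`-submodules of `A`, realised as an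
additive subgroup of `Fin m → A`. -/
def sumLat {m : ℕ} (Ms : Fin m → Submodule R A) : AddSubgroup (Fin m → A) :=
  AddSubgroup.pi Set.univ fun i => (Ms i).toAddSubgroup

/-- Isomorphism of locally free right `Λ`-ideals as right `Λ`-modules. -/
def IdealIso (Λ : Subalgebra R A) (I I' : LocallyFreeIdeal R K A Λ) : Prop :=
  RightLamIso Λ (sumLat ![I.carrier]) (sumLat ![I'.carrier])

/-- The lattice `J ⊕ Λ^r`, as an additive subgroup of `Fin (r+1) → A`. -/
def stdLat (Λ : Subalgebra R A) (J : Submodule R A) (r : ℕ) :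
    AddSubgroup (Fin (r + 1) → A) :=
  sumLat (Fin.cons J fun _ => Subalgebra.toSubmodule Λ)

/-- Two locally free right `Λ`-ideals `J`, `J'` are *stably isomorphic* if
`J ⊕ Λ^r ≅ J' ⊕ Λ^r` as right `Λ`-modules for some `r ≥ 0`. -/
def StablyIsomorphic (Λ : Subalgebra R A) (I I' : LocallyFreeIdeal R K A Λ) : Prop :=
  ∃ r : ℕ, RightLamIso Λ (stdLat Λ I.carrier r) (stdLat Λ I'.carrier r)

end

/-!
Every global field `K` is finite over the fraction field of a Euclidean domain `E` with finite
quotients and an admissible absolute value: `E` is `ℤ`, or `𝔽_p[X]` with `X` mapped into `R`.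
In an `E`-order of a division algebra, a nonzero element of minimal norm generates a right ideal
up to an index that does not depend on the ideal. For a simple module `V` over a semisimple algebra
`B`, the density theorem describes lattices in `V` by such ideals in `End_B V`, so that after an
automorphism of `V` every lattice is squeezed between `c • N` and `c⁻¹ • N` for fixed `c` and `N`,
which leaves finitely many. A lattice in `V × W` differs from the product of its image in `V` and
its intersection with `W` by a shear, up to a bounded index, so finiteness passes to all finitely
generated `B`-modules. An order over `R` contains an order over `E`, and its lattices are generated
by lattices over the latter. Finally, a separable algebra is semisimple: an idempotent in the base
change of its radical is nilpotent, hence zero.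
-/

/-! ### Minimal norms in right ideals -/

section NormEstimates

open Module

theorem exists_abv_norm_le {E O ι : Type*} [CommRing E] [Nontrivial E] [Ring O] [Algebra E O]
    [Fintype ι] (abv : AbsoluteValue E ℤ) (b : Basis ι E O) :
    ∃ C : ℤ, 0 ≤ C ∧ ∀ (a : O) (y : ℤ), (∀ i, abv (b.repr a i) ≤ y) →
      abv (Algebra.norm E a) ≤ C * y ^ Fintype.card ι := by
  classical
  let A : ι → Matrix ι ι E := fun i => Algebra.leftMulMatrix b (b i)
  obtain ⟨m, hm⟩ := Finite.bddAbove_range fun x : ι × ι × ι => abv (A x.1 x.2.1 x.2.2)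
  have hA : ∀ i j k, abv (A i j k) ≤ max m 0 := fun i j k =>
    (hm ⟨(i, j, k), rfl⟩).trans (le_max_left m 0)
  set n := Fintype.card ι
  refine ⟨n.factorial * (n * max m 0) ^ n, by positivity, fun a y hy => ?_⟩
  calc abv (Algebra.norm E a)
      = abv (∑ i, b.repr a i • A i).det := by
        rw [Algebra.norm_eq_matrix_det b]
        conv_lhs => rw [← b.sum_repr a]
        simp only [map_sum, map_smul, A]
    _ ≤ n.factorial • (n • y * max m 0) ^ n := Matrix.det_sum_smul_le Finset.univ hA hy
    _ = n.factorial * (n * max m 0) ^ n * y ^ n := by simp only [nsmul_eq_mul]; ring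

theorem exists_finset_abv_mul_sub_mul_lt {E ι : Type*} [EuclideanDomain E] [Infinite E]
    [Finite ι] {abv : AbsoluteValue E ℤ} (adm : abv.IsAdmissible) {ε : ℝ} (hε : 0 < ε) :
    ∃ T : Finset E, 0 ∉ T ∧ ∀ (a : ι → E) (b : E), b ≠ 0 →
      ∃ (q : ι → E), ∃ r ∈ T, ∀ i, (abv (r * a i - b * q i) : ℝ) < abv b * ε := by
  classical
  have := Fintype.ofFinite ι
  let μ : Fin (adm.card ε ^ Fintype.card ι).succ ↪ E :=
    Fin.valEmbedding.trans (Infinite.natEmbedding E)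
  refine ⟨(Finset.univ.image fun x : _ × _ => μ x.1 - μ x.2).erase 0, Finset.notMem_erase _ _,
    fun a b hb => ?_⟩
  obtain ⟨j, k, hjk, hlt⟩ := adm.exists_approx hε hb fun j i => μ j * a i
  refine ⟨fun i => μ k * a i / b - μ j * a i / b, μ k - μ j, ?_, fun i => ?_⟩
  · exact Finset.mem_erase.mpr ⟨sub_ne_zero.mpr (μ.injective.ne hjk.symm),
      Finset.mem_image_of_mem _ (Finset.mem_univ (k, j))⟩
  · have hmod : (μ k - μ j) * a i - b * (μ k * a i / b - μ j * a i / b)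
        = μ k * a i % b - μ j * a i % b := by
      rw [EuclideanDomain.mod_eq_sub_mul_div, EuclideanDomain.mod_eq_sub_mul_div]
      ring
    simpa only [hmod, zsmul_eq_mul] using hlt i

theorem mul_pow_lt_pow {C x y : ℝ} {n : ℕ} (hC : 0 ≤ C) (hn : n ≠ 0) (hx : 0 ≤ x) (hy : 0 < y)
    (hxy : x ≤ y * (1 / (C + 1))) : C * x ^ n < y ^ n := by
  have hε : 1 / (C + 1) ≤ 1 := by
    rw [div_le_one (by positivity)]
    linarith
  calc C * x ^ n ≤ C * (y * (1 / (C + 1))) ^ n := by gcongr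
    _ = C * (1 / (C + 1)) ^ n * y ^ n := by rw [mul_pow]; ring
    _ ≤ C * (1 / (C + 1)) * y ^ n := by
        gcongr
        exact pow_le_of_le_one (by positivity) hε hn
    _ < 1 * y ^ n := by
        gcongr
        rw [mul_one_div, div_lt_one (by positivity)]
        linarith
    _ = y ^ n := one_mul _

theorem exists_finset_abv_norm_smul_sub_lt {E O : Type*} [EuclideanDomain E] [Infinite E]
    [Ring O] [Nontrivial O] [Algebra E O] [Module.Free E O] [Module.Finite E O]
    {abv : AbsoluteValue E ℤ} (adm : abv.IsAdmissible) :
    ∃ T : Finset E, 0 ∉ T ∧ ∀ (a : O) (b : E), b ≠ 0 → ∃ (q : O), ∃ r ∈ T,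
      abv (Algebra.norm E (r • a - b • q)) < abv (Algebra.norm E (algebraMap E O b)) := by
  classical
  let bas := Module.Free.chooseBasis E O
  have hcard : Fintype.card (Module.Free.ChooseBasisIndex E O) ≠ 0 :=
    have := bas.index_nonempty
    Fintype.card_ne_zero
  obtain ⟨C, hC, hnorm⟩ := exists_abv_norm_le abv bas
  have hC' : (0 : ℝ) ≤ C := by exact_mod_cast hC
  obtain ⟨T, hT, happrox⟩ := exists_finset_abv_mul_sub_mul_lt
    (ι := Module.Free.ChooseBasisIndex E O) adm (ε := 1 / (C + 1)) (by positivity)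
  refine ⟨T, hT, fun a b hb => ?_⟩
  obtain ⟨q, r, hr, hlt⟩ := happrox (bas.repr a) b hb
  refine ⟨∑ i, q i • bas i, r, hr, ?_⟩
  rw [Algebra.norm_algebraMap_of_basis bas, map_pow]
  have hb' : (0 : ℝ) < abv b := by exact_mod_cast abv.pos hb
  have hcoord : ∀ i, abv (bas.repr (r • a - b • ∑ i, q i • bas i) i)
      ≤ ⌊(abv b : ℝ) * (1 / (C + 1))⌋ := fun i => by
    rw [Int.le_floor]
    simpa only [map_sub, map_smul, Finsupp.sub_apply, Finsupp.smul_apply, Basis.repr_sum_self,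
      smul_eq_mul] using (hlt i).le
  refine (hnorm _ _ hcoord).trans_lt ?_
  have hfloor : (0 : ℝ) ≤ ⌊(abv b : ℝ) * (1 / (C + 1))⌋ := by
    have : 0 ≤ (abv b : ℝ) * (1 / (C + 1)) := by positivity
    exact_mod_cast Int.floor_nonneg.mpr this
  exact_mod_cast mul_pow_lt_pow hC' hcard hfloor hb' (Int.floor_le _)

end NormEstimates

section RightIdeals

theorem exists_mul_eq_algebraMap {E O : Type*} [CommRing E] [Ring O] [IsDomain O]
    [Algebra E O] [Algebra.IsAlgebraic E O] {b : O} (hb : b ≠ 0) :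
    ∃ (b' : O) (e : E), e ≠ 0 ∧ b' * b = algebraMap E O e := by
  have hbalg : IsAlgebraic E b := Algebra.IsAlgebraic.isAlgebraic b
  obtain ⟨b', -, e, he, h⟩ :=
    hbalg.exists_nonzero_eq_adjoin_mul (mem_nonZeroDivisors_of_ne_zero hb)
  refine ⟨b', e, he, mul_left_cancel₀ hb ?_⟩
  rw [← mul_assoc, h, Algebra.commutes]

theorem exists_minimal_abv_norm {E O : Type*} [CommRing E] [Ring O] [Algebra E O]
    (abv : AbsoluteValue E ℤ) {I : Submodule E O} (hI : I ≠ ⊥) :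
    ∃ b ∈ I, b ≠ 0 ∧ ∀ a ∈ I, a ≠ 0 →
      abv (Algebra.norm E b) ≤ abv (Algebra.norm E a) := by
  obtain ⟨x, hx, hx0⟩ := I.exists_mem_ne_zero_of_ne_bot hI
  obtain ⟨b, ⟨hb, hb0⟩, hmin⟩ := exists_minimalFor_of_wellFoundedLT
    (fun a : O => a ∈ I ∧ a ≠ 0) (fun a => (abv (Algebra.norm E a)).toNat) ⟨x, hx, hx0⟩
  refine ⟨b, hb, hb0, fun a ha ha0 => ?_⟩
  have hle : (abv (Algebra.norm E b)).toNat ≤ (abv (Algebra.norm E a)).toNat :=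
    (le_total _ _).elim id fun h => hmin ⟨ha, ha0⟩ h
  have := abv.nonneg (Algebra.norm E a)
  omega

-- A nonzero `b ∈ I` of minimal norm generates `I` up to a bounded index: if `b' * b = e`, the
-- remainder of `b' * a` modulo `e` is `b' * (r • a - b * q)`, whose norm is too small for
-- `r • a - b * q ∈ I` to be nonzero.
theorem exists_forall_right_ideal_smul_eq_mul {E O : Type*} [EuclideanDomain E] [Infinite E]
    [Ring O] [IsDomain O] [Algebra E O] [Module.Free E O] [Module.Finite E O]
    {abv : AbsoluteValue E ℤ} (adm : abv.IsAdmissible) :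
    ∃ c : E, c ≠ 0 ∧ ∀ I : Submodule E O, (∀ x ∈ I, ∀ y : O, x * y ∈ I) → I ≠ ⊥ →
      ∃ b ∈ I, b ≠ 0 ∧ ∀ a ∈ I, ∃ q : O, c • a = b * q := by
  classical
  obtain ⟨T, hT, happrox⟩ := exists_finset_abv_norm_smul_sub_lt (O := O) adm
  refine ⟨∏ r ∈ T, r, Finset.prod_ne_zero_iff.mpr fun r hr => ne_of_mem_of_not_mem hr hT,
    fun I hI hI0 => ?_⟩
  obtain ⟨b, hb, hb0, hmin⟩ := exists_minimal_abv_norm abv hI0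
  obtain ⟨b', e, he, hb'⟩ := exists_mul_eq_algebraMap (E := E) hb0
  refine ⟨b, hb, hb0, fun a ha => ?_⟩
  obtain ⟨q, r, hr, hlt⟩ := happrox (b' * a) e he
  have hrem : r • (b' * a) - e • q = b' * (r • a - b * q) := by
    rw [mul_sub, ← mul_assoc, hb', Algebra.smul_def e, mul_smul_comm]
  have hdvd : r • a = b * q := by
    by_contra hne
    rw [hrem, ← hb', map_mul, map_mul, map_mul, map_mul] at hlt
    exact (lt_of_mul_lt_mul_left hlt (abv.nonneg _)).not_ge
      (hmin _ (I.sub_mem (I.smul_mem r ha) (hI b hb q)) (sub_ne_zero.mpr hne))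
  refine ⟨(∏ s ∈ T.erase r, s) • q, ?_⟩
  rw [← Finset.prod_erase_mul T _ hr, mul_smul, hdvd, mul_smul_comm]

end RightIdeals

/-! ### Full lattices and their multipliers -/

section Full

open Module

/-- A subset `M` of an `E`-module `V` is full if every element of `V` has a nonzero `E`-multiple
in `M`. When `E` is a domain with fraction field `F` and `M` is an `E`-submodule of an `F`-vector
space, this says that `M` spans `V` over `F`. -/
def IsFull (E : Type*) {V : Type*} [Zero E] [SMul E V] (M : Set V) : Prop :=
  ∀ v : V, ∃ e : E, e ≠ 0 ∧ e • v ∈ M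

variable {E V W : Type*} [CommRing E] [AddCommGroup V] [Module E V] [AddCommGroup W] [Module E W]

theorem IsFull.mono {M N : Set V} (hM : IsFull E M) (h : M ⊆ N) : IsFull E N := fun v =>
  let ⟨e, he, hev⟩ := hM v
  ⟨e, he, h hev⟩

theorem IsFull.image {M : Set V} (hM : IsFull E M) {f : V →ₗ[E] W}
    (hf : Function.Surjective f) : IsFull E (f '' M) := by
  intro w
  obtain ⟨v, rfl⟩ := hf w
  obtain ⟨e, he, hev⟩ := hM v
  exact ⟨e, he, e • v, hev, map_smul f e v⟩

theorem IsFull.preimage {M : Set W} (hM : IsFull E M) (f : V →ₗ[E] W) :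
    IsFull E (f ⁻¹' M) := by
  intro v
  obtain ⟨e, he, hev⟩ := hM (f v)
  exact ⟨e, he, by rwa [Set.mem_preimage, map_smul]⟩

theorem IsFull.exists_ne_zero [Nontrivial V] [IsDomain E] [IsTorsionFree E V] {M : Set V}
    (hM : IsFull E M) : ∃ x ∈ M, x ≠ 0 := by
  obtain ⟨v, hv⟩ := exists_ne (0 : V)
  obtain ⟨e, he, hev⟩ := hM v
  exact ⟨e • v, hev, smul_ne_zero he hv⟩

theorem IsFull.iInf [IsDomain E] {ι : Type*} [Finite ι] {N : ι → Submodule E V}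
    (hN : ∀ i, IsFull E (N i : Set V)) : IsFull E ((⨅ i, N i : Submodule E V) : Set V) := by
  classical
  have := Fintype.ofFinite ι
  intro v
  choose e he hev using fun i => hN i v
  refine ⟨∏ i, e i, Finset.prod_ne_zero_iff.mpr fun i _ => he i, ?_⟩
  rw [SetLike.mem_coe, Submodule.mem_iInf]
  intro i
  rw [← Finset.prod_erase_mul _ _ (Finset.mem_univ i), mul_smul]
  exact (N i).smul_mem _ (hev i)

theorem IsFull.inf [IsDomain E] {M N : Submodule E V} (hM : IsFull E (M : Set V))
    (hN : IsFull E (N : Set V)) : IsFull E ((M ⊓ N : Submodule E V) : Set V) := by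
  rw [inf_eq_iInf]
  exact IsFull.iInf (by simp [hM, hN])

theorem IsFull.exists_smul_mem [IsDomain E] {M N : Submodule E V} (hN : IsFull E (N : Set V))
    (hM : M.FG) : ∃ c : E, c ≠ 0 ∧ ∀ x ∈ M, c • x ∈ N := by
  obtain ⟨s, rfl⟩ := hM
  have hfull : IsFull E ((⨅ x : s, N.comap (LinearMap.toSpanSingleton E V x.1) :
      Submodule E E) : Set E) :=
    IsFull.iInf fun x => hN.preimage (LinearMap.toSpanSingleton E V x.1)
  obtain ⟨c, hc, hcN⟩ := hfull 1
  simp only [smul_eq_mul, mul_one, SetLike.mem_coe, Submodule.mem_iInf, Subtype.forall] at hcN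
  refine ⟨c, hc, fun x hx => ?_⟩
  have hle : Submodule.span E (s : Set V) ≤ N.comap (LinearMap.lsmul E V c) :=
    Submodule.span_le.mpr hcN
  exact hle hx

theorem IsFull.restrictScalars {R : Type*} [CommRing R] [Algebra E R] [Module R V]
    [IsScalarTower E R V] (hdvd : ∀ r : R, r ≠ 0 → ∃ e : E, e ≠ 0 ∧ r ∣ algebraMap E R e)
    {M : Submodule R V} (hM : IsFull R (M : Set V)) : IsFull E (M : Set V) := by
  intro v
  obtain ⟨r, hr, hrv⟩ := hM v
  obtain ⟨e, he, t, ht⟩ := hdvd r hr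
  refine ⟨e, he, ?_⟩
  rw [← algebraMap_smul R e v, ht, mul_comm, mul_smul]
  exact M.smul_mem t hrv

theorem isFull_of_span_eq_top {F : Type*} [IsDomain E] [Field F] [Algebra E F]
    [IsFractionRing E F] [Module F V] [IsScalarTower E F V] {M : Submodule E V}
    (hM : Submodule.span F (M : Set V) = ⊤) : IsFull E (M : Set V) := by
  intro v
  have hv : v ∈ Submodule.span F (M : Set V) := hM ▸ Submodule.mem_top
  obtain ⟨y, hy, z, rfl⟩ := (IsLocalization.mem_span_iff (nonZeroDivisors E)).mp hv
  refine ⟨z, nonZeroDivisors.ne_zero z.2, ?_⟩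
  rw [Submodule.span_eq] at hy
  rwa [← algebraMap_smul F (z : E), smul_smul, IsLocalization.mk'_spec', map_one, one_smul]

theorem exists_fg_isFull (E F V : Type*) [CommRing E] [IsDomain E] [Field F]
    [Algebra E F] [IsFractionRing E F] [AddCommGroup V] [Module E V] [Module F V]
    [IsScalarTower E F V] [Module.Finite F V] :
    ∃ M : Submodule E V, M.FG ∧ IsFull E (M : Set V) := by
  obtain ⟨s, hs⟩ := Module.Finite.fg_top (R := F) (M := V)
  refine ⟨Submodule.span E s, ⟨s, rfl⟩, isFull_of_span_eq_top (F := F) ?_⟩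
  rw [Submodule.span_span_of_tower, hs]

section IsUnit

variable {B : Type*} [Ring B] [Algebra E B] [Module B V] [IsScalarTower E B V]

theorem isTorsionFree_of_isUnit_algebraMap [IsDomain E]
    (hu : ∀ e : E, e ≠ 0 → IsUnit (algebraMap E B e)) : IsTorsionFree E V := by
  rw [isTorsionFree_iff_smul_eq_zero]
  intro e v hev
  refine or_iff_not_imp_left.mpr fun he => ?_
  rwa [← algebraMap_smul B e v, (hu e he).smul_eq_zero] at hev

theorem IsFull.eq_top (hu : ∀ e : E, e ≠ 0 → IsUnit (algebraMap E B e)) {M : Submodule B V}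
    (hM : IsFull E (M : Set V)) : M = ⊤ := by
  rw [eq_top_iff]
  intro v _
  obtain ⟨e, he, hev⟩ := hM v
  rw [← algebraMap_smul B e v] at hev
  exact (M.smul_mem_iff_of_isUnit (hu e he)).mp hev

end IsUnit

end Full

section Multipliers

variable {E V : Type*} [CommRing E] [AddCommGroup V] [Module E V]
variable (D : Type*) [Ring D] [Algebra E D] [Module D V] [IsScalarTower E D V]

/-- The conductor `(M : N)` in `D`: the elements of `D` that multiply `N` into `M`. -/
def multipliers (N M : Submodule E V) : Submodule E D where
  carrier := {d | ∀ x ∈ N, d • x ∈ M}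
  zero_mem' x _ := by simp
  add_mem' hd hd' x hx := by
    rw [add_smul]
    exact M.add_mem (hd x hx) (hd' x hx)
  smul_mem' e d hd x hx := by
    rw [smul_assoc]
    exact M.smul_mem e (hd x hx)

/-- The order of a lattice `M` in `D`: the elements of `D` that multiply `M` into itself. -/
def multiplierOrder (M : Submodule E V) : Subalgebra E D :=
  (multipliers D M M).toSubalgebra (fun x hx => by rwa [one_smul])
    fun d d' hd hd' x hx => by
      rw [mul_smul]
      exact hd _ (hd' x hx)

variable {D}

theorem mul_mem_multipliers {N M : Submodule E V} {d q : D} (hd : d ∈ multipliers D N M)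
    (hq : q ∈ multiplierOrder D N) : d * q ∈ multipliers D N M := fun x hx => by
  rw [mul_smul]
  exact hd _ (hq x hx)

theorem fg_multipliers [IsNoetherianRing E] {N M : Submodule E V} (hM : M.FG) {x : V}
    (hx : x ∈ N) (hinj : Function.Injective fun d : D => d • x) : (multipliers D N M).FG := by
  have := isNoetherian_of_fg_of_noetherian M hM
  let evalAt : D →ₗ[E] V := (LinearMap.toSpanSingleton D V x).restrictScalars E
  refine Submodule.fg_of_fg_map_injective evalAt hinj ?_
  refine isNoetherian_submodule.mp this _ ?_
  rintro _ ⟨d, hd, rfl⟩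
  exact hd x hx

theorem isFull_multipliers [IsDomain E] {N M : Submodule E V} (hN : N.FG)
    (hM : IsFull E (M : Set V)) : IsFull E (multipliers D N M : Set D) := by
  intro d
  obtain ⟨e, he, heM⟩ := hM.exists_smul_mem (hN.map (Algebra.lsmul E E V d))
  refine ⟨e, he, fun x hx => ?_⟩
  rw [smul_assoc]
  exact heM _ (Submodule.mem_map_of_mem hx)

end Multipliers

section Sandwich

open Module

variable {E V : Type*} [CommRing E] [Ring.HasFiniteQuotients E] [AddCommGroup V] [Module E V]

-- `M` is recovered from the image of `c • M ⊆ P` in the finite module `P / c² P`.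
theorem finite_setOf_smul_mem [IsDomain E] [IsTorsionFree E V] {Λ : Type*} [Ring Λ] [Module Λ V]
    {P : Submodule E V} (hP : P.FG) {c : E} (hc : c ≠ 0) :
    {M : Submodule Λ V | (∀ x ∈ P, c • x ∈ M) ∧ ∀ x ∈ M, c • x ∈ P}.Finite := by
  have : Module.Finite E P := Module.Finite.iff_fg.mpr hP
  have : Finite (E ⧸ Ideal.span {c * c}) :=
    Ring.HasFiniteQuotients.finiteQuotient (by simpa using hc)
  have : Finite (P ⧸ Ideal.span {c * c} • (⊤ : Submodule E P)) :=
    Submodule.finite_quotient_smul _ Module.Finite.fg_top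
  let π := (Ideal.span {c * c} • (⊤ : Submodule E P)).mkQ
  refine Set.Finite.of_injOn (t := Set.univ)
    (f := fun M : Submodule Λ V => {q | ∃ x : P, (∃ m ∈ M, c • m = x) ∧ π x = q})
    (Set.mapsTo_univ _ _) ?_ Set.finite_univ
  have hle : ∀ M N : Submodule Λ V, (∀ x ∈ M, c • x ∈ P) → (∀ x ∈ P, c • x ∈ N) →
      {q | ∃ x : P, (∃ m ∈ M, c • m = x) ∧ π x = q} =
        {q | ∃ x : P, (∃ m ∈ N, c • m = x) ∧ π x = q} → M ≤ N := by
    intro M N hMP hPN hMN m hm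
    obtain ⟨x, ⟨n, hn, hx⟩, hπ⟩ := hMN.subset ⟨⟨c • m, hMP m hm⟩, ⟨m, hm, rfl⟩, rfl⟩
    have hmem := (Submodule.Quotient.eq _).mp hπ.symm
    rw [Submodule.ideal_span_singleton_smul, Submodule.mem_smul_pointwise_iff_exists] at hmem
    obtain ⟨y, -, hy⟩ := hmem
    have hy : c • c • (y : V) = c • m - x := by
      rw [← mul_smul]
      exact congrArg Subtype.val hy
    rw [← hx, ← smul_sub] at hy
    have hmn : m = n + c • y := by rw [smul_right_injective V hc hy, add_sub_cancel]
    exact hmn ▸ N.add_mem hn (hPN y y.2)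
  rintro M ⟨hPM, hMP⟩ N ⟨hPN, hNP⟩ hMN
  exact (hle M N hMP hPN hMN).antisymm (hle N M hNP hPM hMN.symm)

end Sandwich

section FractionalRightIdeals

open Module

theorem exists_forall_fractional_right_ideal_smul_eq_mul {E D : Type*} [EuclideanDomain E]
    [Infinite E] [DivisionRing D] [Algebra E D] [IsTorsionFree E D] {abv : AbsoluteValue E ℤ}
    (adm : abv.IsAdmissible) (O : Subalgebra E D) [Module.Finite E O]
    (hO : IsFull E (O : Set D)) :
    ∃ c : E, c ≠ 0 ∧ ∀ H : Submodule E D, H.FG → H ≠ ⊥ → (∀ d ∈ H, ∀ q ∈ O, d * q ∈ H) →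
      ∃ y ∈ H, y ≠ 0 ∧ ∀ d ∈ H, ∃ q ∈ O, c • d = y * q := by
  obtain ⟨c, hc, hright⟩ := exists_forall_right_ideal_smul_eq_mul (O := O) adm
  refine ⟨c, hc, fun H hfg hH0 hmul => ?_⟩
  obtain ⟨e, he, heO⟩ := IsFull.exists_smul_mem (N := Subalgebra.toSubmodule O) hO hfg
  let I : Submodule E O := (H.map (LinearMap.lsmul E D e)).comap O.val.toLinearMap
  have hI : ∀ x ∈ I, ∀ q : O, x * q ∈ I := by
    rintro x ⟨d, hd, hdx⟩ q
    refine ⟨d * q, hmul d hd q q.2, ?_⟩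
    rw [LinearMap.lsmul_apply] at hdx ⊢
    rw [← smul_mul_assoc, hdx]
    rfl
  obtain ⟨d₀, hd₀, hd₀0⟩ := H.exists_mem_ne_zero_of_ne_bot hH0
  have hI0 : I ≠ ⊥ := (Submodule.ne_bot_iff _).mpr ⟨⟨e • d₀, heO d₀ hd₀⟩, ⟨d₀, hd₀, rfl⟩,
    Subtype.coe_ne_coe.mp (smul_ne_zero he hd₀0)⟩
  obtain ⟨b, ⟨y, hy, hyb⟩, hb0, hb⟩ := hright I hI hI0
  replace hyb : e • y = b := hyb
  refine ⟨y, hy, ?_, fun d hd => ?_⟩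
  · rintro rfl
    exact hb0 (Subtype.ext (by rw [← hyb, smul_zero, ZeroMemClass.coe_zero]))
  · obtain ⟨q, hq⟩ := hb ⟨e • d, heO d hd⟩ ⟨d, hd, rfl⟩
    have hq' : c • e • d = b * q := congrArg Subtype.val hq
    refine ⟨q, q.2, smul_right_injective D he ?_⟩
    change e • c • d = e • (y * q)
    rw [smul_comm, hq', ← hyb, smul_mul_assoc]

end FractionalRightIdeals

/-! ### The Jordan–Zassenhaus property -/

section Lattices

/-- A full lattice in `V`, relative to the scalars `E`: a finitely generated `Λ`-submodule which
is full over `E`. If `Λ` is finite over `E`, these are the `Λ`-stable full `E`-lattices. -/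
def IsFullLattice (E : Type*) {Λ V : Type*} [Zero E] [Ring Λ] [AddCommGroup V] [SMul E V]
    [Module Λ V] (M : Submodule Λ V) : Prop :=
  M.FG ∧ IsFull E (M : Set V)

/-- The Jordan–Zassenhaus property of the `Λ`-module `V`: up to automorphisms of `V`, there are
only finitely many full `Λ`-lattices in `V`. -/
def IsJordanZassenhaus (E Λ V : Type*) [Zero E] [Ring Λ] [AddCommGroup V] [SMul E V]
    [Module Λ V] : Prop :=
  ∃ S : Set (Submodule Λ V), S.Finite ∧
    ∀ M, IsFullLattice E M → ∃ g : V ≃ₗ[Λ] V, M.map (g : V →ₗ[Λ] V) ∈ S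

variable {E Λ V W : Type*} [CommRing E] [Ring Λ] [AddCommGroup V] [Module E V] [Module Λ V]
  [AddCommGroup W] [Module E W] [Module Λ W]

theorem IsFullLattice.map [LinearMap.CompatibleSMul V W E Λ] {M : Submodule Λ V}
    (hM : IsFullLattice E M) {f : V →ₗ[Λ] W} (hf : Function.Surjective f) :
    IsFullLattice E (M.map f) :=
  ⟨hM.1.map f, hM.2.image (f := f.restrictScalars E) hf⟩

theorem IsFullLattice.comap [LinearMap.CompatibleSMul V W E Λ] [IsNoetherianRing Λ]
    {M : Submodule Λ W} (hM : IsFullLattice E M) {f : V →ₗ[Λ] W} (hf : Function.Injective f) :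
    IsFullLattice E (M.comap f) := by
  have := isNoetherian_of_fg_of_noetherian M hM.1
  refine ⟨Submodule.fg_of_fg_map_injective f hf ?_, hM.2.preimage (f.restrictScalars E)⟩
  exact isNoetherian_submodule.mp this _ (Submodule.map_comap_le f M)

theorem IsJordanZassenhaus.congr [LinearMap.CompatibleSMul W V E Λ]
    (hV : IsJordanZassenhaus E Λ V) (e : V ≃ₗ[Λ] W) : IsJordanZassenhaus E Λ W := by
  obtain ⟨S, hS, hrep⟩ := hV
  refine ⟨(fun M => M.map (e : V →ₗ[Λ] W)) '' S, hS.image _, fun M hM => ?_⟩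
  obtain ⟨g, hg⟩ := hrep _ (hM.map (f := (e.symm : W →ₗ[Λ] V)) e.symm.surjective)
  refine ⟨(e.symm.trans g).trans e, _, hg, ?_⟩
  simp only [LinearEquiv.coe_trans, Submodule.map_comp]

theorem IsJordanZassenhaus.finite_quot {X : Type*} {r : X → X → Prop}
    (hV : IsJordanZassenhaus E Λ V) (f : X → Submodule Λ V) (hf : ∀ x, IsFullLattice E (f x))
    (hr : ∀ (x y : X) (g : V ≃ₗ[Λ] V), (f x).map (g : V →ₗ[Λ] V) = f y → r x y) :
    Finite (Quot r) := by
  obtain ⟨S, hS, hrep⟩ := hV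
  choose g hg using fun x => hrep (f x) (hf x)
  have := hS.to_subtype
  refine Finite.of_injective
    (fun q : Quot r => (⟨_, hg q.out⟩ : S)) fun q q' hqq' => ?_
  rw [← Quot.out_eq q, ← Quot.out_eq q']
  refine Quot.sound (hr _ _ ((g q.out).trans (g q'.out).symm) ?_)
  have hmap : (f q.out).map (g q.out : V →ₗ[Λ] V) = (f q'.out).map (g q'.out : V →ₗ[Λ] V) :=
    congrArg Subtype.val hqq'
  rw [LinearEquiv.coe_trans, Submodule.map_comp, hmap, ← Submodule.map_comp,
    LinearEquiv.symm_comp, Submodule.map_id]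

end Lattices

section Prod

open Module

variable {E B V W : Type*} [CommRing E] [IsDomain E] [Ring B] [Algebra E B]
  [AddCommGroup V] [Module E V] [Module B V] [IsScalarTower E B V]
  [AddCommGroup W] [Module E W] [Module B W] [IsScalarTower E B W]
  {Λ : Subalgebra E B} [Module.Finite E Λ]

theorem exists_smul_mk_mem_of_map_fst_eq [Projective B V]
    (hu : ∀ e : E, e ≠ 0 → IsUnit (algebraMap E B e)) (hΛ : IsFull E (Λ : Set B))
    {L : Submodule Λ V} (hL : IsFullLattice E L) :
    ∃ c : E, c ≠ 0 ∧ ∀ M : Submodule Λ (V × W), M.map (LinearMap.fst Λ V W) = L →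
      ∃ h : V →ₗ[B] W, ∀ l ∈ L, c • (l, h l) ∈ M := by
  obtain ⟨n, s, rfl⟩ := Submodule.fg_iff_exists_fin_generating_family.mp hL.1
  have hspan : (Fintype.linearCombination B s).range = ⊤ := by
    rw [Fintype.range_linearCombination]
    exact (hL.2.mono (Submodule.span_subset_span Λ B _)).eq_top hu
  obtain ⟨σ, hσ⟩ := (Fintype.linearCombination B s).exists_rightInverse_of_surjective hspan
  have hden : IsFull E ((⨅ i, (Subalgebra.toSubmodule Λ).comap
      (((LinearMap.proj i).comp σ).restrictScalars E) : Submodule E V) : Set V) :=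
    IsFull.iInf fun i => IsFull.preimage (M := (Λ : Set B)) hΛ _
  obtain ⟨c, hc, hcΛ⟩ := hden.exists_smul_mem (hL.1.restrictScalars (R := E))
  simp only [Submodule.mem_iInf] at hcΛ
  refine ⟨c, hc, fun M hM => ?_⟩
  have hlift : ∀ i, ∃ w, (s i, w) ∈ M := fun i => by
    have hs : s i ∈ M.map (LinearMap.fst Λ V W) :=
      hM ▸ Submodule.subset_span (Set.mem_range_self i)
    obtain ⟨⟨_, w⟩, hw, rfl⟩ := hs
    exact ⟨w, hw⟩
  choose w hw using hlift
  refine ⟨(Fintype.linearCombination B w).comp σ, fun l hl => ?_⟩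
  have hsum : c • (l, (Fintype.linearCombination B w) (σ l))
      = ∑ i, (⟨σ (c • l) i, hcΛ l hl i⟩ : Λ) • (s i, w i) := by
    have hσl : ∑ i, σ l i • s i = l := LinearMap.congr_fun hσ l
    ext
    · simp [Prod.fst_sum, Subalgebra.smul_def, ← Finset.smul_sum, hσl, σ.map_smul_of_tower]
    · simp [Prod.snd_sum, Subalgebra.smul_def, ← Finset.smul_sum, σ.map_smul_of_tower,
        Fintype.linearCombination_apply]
  exact hsum ▸ M.sum_mem fun i _ => M.smul_mem _ (hw i)

theorem exists_linearEquiv_smul_mem_prod [Projective B V]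
    (hu : ∀ e : E, e ≠ 0 → IsUnit (algebraMap E B e)) (hΛ : IsFull E (Λ : Set B))
    {L : Submodule Λ V} (hL : IsFullLattice E L) :
    ∃ c : E, c ≠ 0 ∧ ∀ M : Submodule Λ (V × W), M.map (LinearMap.fst Λ V W) = L →
      ∃ g : (V × W) ≃ₗ[Λ] V × W,
        (∀ x ∈ L.prod (M.comap (LinearMap.inr Λ V W)), c • x ∈ M.map (g : V × W →ₗ[Λ] V × W)) ∧
        ∀ x ∈ M.map (g : V × W →ₗ[Λ] V × W),
          c • x ∈ L.prod (M.comap (LinearMap.inr Λ V W)) := by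
  obtain ⟨c, hc, hsec⟩ := exists_smul_mk_mem_of_map_fst_eq (W := W) hu hΛ hL
  refine ⟨c, hc, fun M hM => ?_⟩
  obtain ⟨h, hh⟩ := hsec M hM
  let shear : (V × W) ≃ₗ[B] V × W := (LinearEquiv.refl B V).skewProd (LinearEquiv.refl B W) (-h)
  refine ⟨shear.restrictScalars Λ, ?_, ?_⟩
  · rintro ⟨l, k⟩ ⟨hl, hk⟩
    refine ⟨c • (l, h l) + c • (0, k), M.add_mem (hh l hl) (M.smul_of_tower_mem c hk), ?_⟩
    simp [shear]
  · rintro _ ⟨⟨v, w⟩, hvw, rfl⟩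
    have hv : v ∈ L := hM ▸ Submodule.mem_map_of_mem hvw
    refine ⟨L.smul_of_tower_mem c hv, ?_⟩
    have hker : c • (v, w) - c • (v, h v) ∈ M :=
      M.sub_mem (M.smul_of_tower_mem c hvw) (hh v hv)
    simpa [shear, sub_eq_add_neg] using hker

theorem map_fst_map_prodCongr {Λ V W : Type*} [Ring Λ] [AddCommGroup V] [Module Λ V]
    [AddCommGroup W] [Module Λ W] (M : Submodule Λ (V × W)) (g₁ : V ≃ₗ[Λ] V) (g₂ : W ≃ₗ[Λ] W) :
    (M.map (g₁.prodCongr g₂ : V × W →ₗ[Λ] V × W)).map (LinearMap.fst Λ V W) =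
      (M.map (LinearMap.fst Λ V W)).map (g₁ : V →ₗ[Λ] V) := by
  rw [← Submodule.map_comp, ← Submodule.map_comp]
  rfl

theorem comap_inr_map_prodCongr {Λ V W : Type*} [Ring Λ] [AddCommGroup V] [Module Λ V]
    [AddCommGroup W] [Module Λ W] (M : Submodule Λ (V × W)) (g₁ : V ≃ₗ[Λ] V) (g₂ : W ≃ₗ[Λ] W) :
    (M.map (g₁.prodCongr g₂ : V × W →ₗ[Λ] V × W)).comap (LinearMap.inr Λ V W) =
      (M.comap (LinearMap.inr Λ V W)).map (g₂ : W →ₗ[Λ] W) := by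
  rw [Submodule.map_equiv_eq_comap_symm, Submodule.map_equiv_eq_comap_symm,
    ← Submodule.comap_comp, ← Submodule.comap_comp]
  congr 1
  ext w <;> simp

theorem IsJordanZassenhaus.prod [Projective B V] [Ring.HasFiniteQuotients E]
    (hu : ∀ e : E, e ≠ 0 → IsUnit (algebraMap E B e)) (hΛ : IsFull E (Λ : Set B))
    (hV : IsJordanZassenhaus E Λ V) (hW : IsJordanZassenhaus E Λ W) :
    IsJordanZassenhaus E Λ (V × W) := by
  have : IsTorsionFree E (V × W) := isTorsionFree_of_isUnit_algebraMap hu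
  have : IsNoetherianRing Λ := IsNoetherianRing.of_finite E Λ
  obtain ⟨S, hS, hSrep⟩ := hV
  obtain ⟨T, hT, hTrep⟩ := hW
  choose! c hc hshear using fun (L : Submodule Λ V) (hL : IsFullLattice E L) =>
    exists_linearEquiv_smul_mem_prod (W := W) hu hΛ hL
  let near (Q : Submodule Λ V × Submodule Λ W) : Set (Submodule Λ (V × W)) :=
    {M | (∀ x ∈ Q.1.prod Q.2, c Q.1 • x ∈ M) ∧ ∀ x ∈ M, c Q.1 • x ∈ Q.1.prod Q.2}
  refine ⟨⋃ Q ∈ S ×ˢ T ∩ {Q | IsFullLattice E Q.1 ∧ IsFullLattice E Q.2}, near Q,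
    ((hS.prod hT).inter_of_left _).biUnion fun Q hQ => ?_, fun M hM => ?_⟩
  · exact finite_setOf_smul_mem ((hQ.2.1.1.prod hQ.2.2.1).restrictScalars (R := E))
      (hc Q.1 hQ.2.1)
  · have hL := hM.map (f := LinearMap.fst Λ V W) LinearMap.fst_surjective
    have hN := hM.comap (f := LinearMap.inr Λ V W) LinearMap.inr_injective
    obtain ⟨g₁, hg₁⟩ := hSrep _ hL
    obtain ⟨g₂, hg₂⟩ := hTrep _ hN
    have hgL := hL.map (f := (g₁ : V →ₗ[Λ] V)) g₁.surjective
    have hgN := hN.map (f := (g₂ : W →ₗ[Λ] W)) g₂.surjective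
    obtain ⟨g, hg⟩ := hshear _ hgL _ (map_fst_map_prodCongr M g₁ g₂)
    rw [comap_inr_map_prodCongr] at hg
    refine ⟨(g₁.prodCongr g₂).trans g, Set.mem_biUnion (x := (_, _)) ⟨⟨hg₁, hg₂⟩, hgL, hgN⟩ ?_⟩
    rwa [LinearEquiv.coe_trans, Submodule.map_comp]

end Prod

/-! ### Semisimple modules over a Euclidean base -/

section Density

open Module

variable {E B D V : Type*} [Ring B] [DivisionRing D] [AddCommGroup V] [Module B V] [Module D V]

theorem exists_smul_coord_mem_multipliers [CommRing E] [IsDomain E] [Algebra E B] [Algebra E D]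
    [Module E V] [IsScalarTower E B V] [IsScalarTower E D V] {ι : Type*} [Finite ι]
    (b : Basis ι D V) (hdense : ∀ f : V →ₗ[D] V, ∃ β : B, ∀ v, f v = β • v)
    {Λ : Subalgebra E B} (hΛ : IsFull E (Λ : Set B)) {N : Submodule E V} (hN : N.FG) :
    ∃ c : E, c ≠ 0 ∧ ∀ (M : Submodule Λ V), ∀ v ∈ M, ∀ i,
      c • b.coord i v ∈ multipliers D N (M.restrictScalars E) := by
  let rankOneIn (i : ι) : Submodule E V :=
    { carrier := {x | ∃ a : Λ, ∀ v, a • v = b.coord i v • x}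
      zero_mem' := ⟨0, by simp⟩
      add_mem' := fun ⟨a, ha⟩ ⟨a', ha'⟩ => ⟨a + a', by simp [add_smul, ha, ha']⟩
      smul_mem' := fun e x ⟨a, ha⟩ => ⟨e • a, fun v => by rw [smul_assoc, ha, smul_comm]⟩ }
  have hfull : ∀ i, IsFull E (rankOneIn i : Set V) := fun i x => by
    obtain ⟨β, hβ⟩ := hdense ((b.coord i).smulRight x)
    obtain ⟨e, he, heΛ⟩ := hΛ β
    refine ⟨e, he, ⟨e • β, heΛ⟩, fun v => ?_⟩
    change (e • β) • v = b.coord i v • e • x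
    rw [smul_assoc, ← hβ v, LinearMap.smulRight_apply, smul_comm]
  obtain ⟨c, hc, hcN⟩ := (IsFull.iInf hfull).exists_smul_mem hN
  simp only [Submodule.mem_iInf] at hcN
  refine ⟨c, hc, fun M v hv i x hx => ?_⟩
  obtain ⟨a, ha⟩ := hcN x hx i
  rw [smul_assoc, smul_comm, ← ha v]
  exact M.smul_mem a hv

theorem exists_forall_isFullLattice_inv_smul_mem [EuclideanDomain E] [Infinite E]
    [Algebra E B] [Algebra E D] [Module E V] [IsScalarTower E B V] [IsScalarTower E D V]
    [IsTorsionFree E D] [Nontrivial V] [Module.Finite D V]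
    (hdense : ∀ f : V →ₗ[D] V, ∃ β : B, ∀ v, f v = β • v)
    {abv : AbsoluteValue E ℤ} (adm : abv.IsAdmissible)
    {Λ : Subalgebra E B} [Module.Finite E Λ] (hΛ : IsFull E (Λ : Set B))
    {N : Submodule E V} (hN : N.FG) (hNfull : IsFull E (N : Set V)) :
    ∃ c : E, c ≠ 0 ∧ ∀ M : Submodule Λ V, IsFullLattice E M → ∃ y : D, y ≠ 0 ∧
      (∀ x ∈ N, y • x ∈ M) ∧ ∀ v ∈ M, c • y⁻¹ • v ∈ N := by
  have : IsTorsionFree E V := isTorsionFree_of_isUnit_algebraMap (B := D) fun e he => by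
    simpa using he
  let b := Module.finBasis D V
  obtain ⟨x, hx, hx0⟩ := hNfull.exists_ne_zero
  have hinj : Function.Injective fun d : D => d • x := smul_left_injective D hx0
  have : Module.Finite E (multiplierOrder D N) :=
    Module.Finite.iff_fg.mpr (fg_multipliers hN hx hinj)
  obtain ⟨c₁, hc₁, hright⟩ := exists_forall_fractional_right_ideal_smul_eq_mul adm
    (multiplierOrder D N) (isFull_multipliers hN hNfull)
  obtain ⟨c₂, hc₂, hcoord⟩ := exists_smul_coord_mem_multipliers b hdense hΛ hN
  obtain ⟨c₃, hc₃, hb⟩ := hNfull.exists_smul_mem (Submodule.fg_span (Set.finite_range b))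
  refine ⟨c₁ * c₂ * c₃, mul_ne_zero (mul_ne_zero hc₁ hc₂) hc₃, fun M hM => ?_⟩
  have hH0 : multipliers D N (M.restrictScalars E) ≠ ⊥ :=
    (Submodule.ne_bot_iff _).mpr (isFull_multipliers hN hM.2).exists_ne_zero
  obtain ⟨y, hy, hy0, hyright⟩ := hright _ (fg_multipliers (hM.1.restrictScalars (R := E)) hx hinj)
    hH0 fun d hd q hq => mul_mem_multipliers hd hq
  refine ⟨y, hy0, hy, fun v hv => ?_⟩
  choose q hq hcq using fun i => hyright _ (hcoord M v hv i)
  have hsum : (c₁ * c₂ * c₃) • y⁻¹ • v = ∑ i, q i • c₃ • b i :=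
    calc (c₁ * c₂ * c₃) • y⁻¹ • v
        = c₃ • ∑ i, (y⁻¹ * c₁ • c₂ • b.coord i v) • b i := by
          conv_lhs => rw [← b.sum_repr v]
          simp only [Finset.smul_sum, smul_smul, mul_smul_comm, Basis.coord_apply,
            ← smul_assoc, mul_comm]
      _ = ∑ i, q i • c₃ • b i := by
          simp only [hcq, inv_mul_cancel_left₀ hy0, Finset.smul_sum, smul_comm c₃]
  rw [hsum]
  exact N.sum_mem fun i _ => hq i _ (hb _ (Submodule.subset_span ⟨i, rfl⟩))

theorem finite_of_fg_of_isFull [CommRing E] [Algebra E D] [Module E V] [IsScalarTower E D V]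
    [FaithfulSMul E D] {N : Submodule E V} (hN : N.FG) (hNfull : IsFull E (N : Set V)) :
    Module.Finite D V := by
  obtain ⟨s, rfl⟩ := hN
  exact ⟨s, (hNfull.mono (Submodule.span_subset_span E D _)).eq_top fun e he => by simpa using he⟩

theorem IsJordanZassenhaus.of_density [EuclideanDomain E] [Infinite E]
    [Ring.HasFiniteQuotients E] [Algebra E B] [Algebra E D] [Module E V] [IsScalarTower E B V]
    [IsScalarTower E D V] [SMulCommClass D B V] [IsTorsionFree E D] [Nontrivial V]
    [Module.Finite D V] (hdense : ∀ f : V →ₗ[D] V, ∃ β : B, ∀ v, f v = β • v)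
    {abv : AbsoluteValue E ℤ} (adm : abv.IsAdmissible)
    {Λ : Subalgebra E B} [Module.Finite E Λ] (hΛ : IsFull E (Λ : Set B))
    {N : Submodule E V} (hN : N.FG) (hNfull : IsFull E (N : Set V)) :
    IsJordanZassenhaus E Λ V := by
  have : IsTorsionFree E V := isTorsionFree_of_isUnit_algebraMap (B := D) fun e he => by
    simpa using he
  obtain ⟨c, hc, hinv⟩ := exists_forall_isFullLattice_inv_smul_mem hdense adm hΛ hN hNfull
  refine ⟨_, finite_setOf_smul_mem hN hc, fun M hM => ?_⟩
  obtain ⟨y, hy0, hyN, hyM⟩ := hinv M hM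
  refine ⟨DistribMulAction.toLinearEquiv Λ V (Units.mk0 y hy0)⁻¹, fun x hx => ?_, ?_⟩
  · exact Submodule.smul_of_tower_mem _ c ⟨y • x, hyN x hx, inv_smul_smul (Units.mk0 y hy0) x⟩
  · rintro _ ⟨v, hv, rfl⟩
    exact hyM v hv

theorem IsJordanZassenhaus.of_isSimpleModule [EuclideanDomain E] [Infinite E]
    [Ring.HasFiniteQuotients E] [Algebra E B] [Module E V] [IsScalarTower E B V]
    [IsSimpleModule B V] {abv : AbsoluteValue E ℤ} (adm : abv.IsAdmissible)
    (hu : ∀ e : E, e ≠ 0 → IsUnit (algebraMap E B e))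
    {Λ : Subalgebra E B} [Module.Finite E Λ] (hΛ : IsFull E (Λ : Set B)) :
    IsJordanZassenhaus E Λ V := by
  classical
  by_cases hlat : ∃ M : Submodule Λ V, IsFullLattice E M
  · obtain ⟨M, hM, hfull⟩ := hlat
    replace hM := hM.restrictScalars (R := E)
    have : Nontrivial V := IsSimpleModule.nontrivial B V
    have : SMulCommClass B E V := IsScalarTower.to_smulCommClass'
    have : IsTorsionFree E V := isTorsionFree_of_isUnit_algebraMap hu
    have : IsTorsionFree E (Module.End B V) := inferInstance
    have : Module.Finite (Module.End B V) V := finite_of_fg_of_isFull hM hfull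
    refine .of_density (D := Module.End B V) (fun f => ?_) adm hΛ hM hfull
    obtain ⟨β, hβ⟩ := Module.Finite.toModuleEnd_moduleEnd_surjective (R := B) (M := V) f
    exact ⟨β, fun v => (LinearMap.congr_fun hβ v).symm⟩
  · exact ⟨∅, Set.finite_empty, fun M hM => (hlat ⟨M, hM⟩).elim⟩

theorem IsJordanZassenhaus.of_isFiniteLength [EuclideanDomain E] [Infinite E]
    [Ring.HasFiniteQuotients E] [Algebra E B] [IsSemisimpleRing B]
    {abv : AbsoluteValue E ℤ} (adm : abv.IsAdmissible)
    (hu : ∀ e : E, e ≠ 0 → IsUnit (algebraMap E B e))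
    {Λ : Subalgebra E B} [Module.Finite E Λ] (hΛ : IsFull E (Λ : Set B))
    (V : Type*) [AddCommGroup V] [Module B V] (hV : IsFiniteLength B V) :
    ∀ [Module E V] [IsScalarTower E B V], IsJordanZassenhaus E Λ V := by
  induction hV with
  | of_subsingleton =>
    intro _ _
    exact ⟨Set.univ, Set.subsingleton_of_subsingleton.finite,
      fun M _ => ⟨LinearEquiv.refl _ _, trivial⟩⟩
  | @of_simple_quotient M _ _ N _ _ ih =>
    intro _ _
    obtain ⟨N', hN'⟩ := exists_isCompl N
    have : IsSimpleModule B N' :=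
      IsSimpleModule.congr (Submodule.quotientEquivOfIsCompl N N' hN').symm
    have : Projective B N := projective_of_isSemisimpleRing B N
    exact (ih.prod hu hΛ (.of_isSimpleModule adm hu hΛ)).congr
      ((Submodule.prodEquivOfIsCompl N N' hN').restrictScalars Λ)

theorem IsJordanZassenhaus.of_isSemisimpleRing [EuclideanDomain E] [Infinite E]
    [Ring.HasFiniteQuotients E] [Algebra E B] [IsSemisimpleRing B] [Module E V]
    [IsScalarTower E B V] [Module.Finite B V] {abv : AbsoluteValue E ℤ} (adm : abv.IsAdmissible)
    (hu : ∀ e : E, e ≠ 0 → IsUnit (algebraMap E B e))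
    {Λ : Subalgebra E B} [Module.Finite E Λ] (hΛ : IsFull E (Λ : Set B)) :
    IsJordanZassenhaus E Λ V :=
  .of_isFiniteLength adm hu hΛ V ((IsSemisimpleModule.finite_tfae.out 0 3).mp ‹_›)

end Density

/-! ### Change of base ring -/

section Descent

open Module

variable {E R B V : Type*} [CommRing E] [CommRing R] [Ring B] [Algebra E B] [Algebra R B]
  [AddCommGroup V] [Module B V] {Λ₀ : Subalgebra E B} {Λ : Subalgebra R B}

theorem span_span_of_subset (hle : (Λ₀ : Set B) ⊆ Λ) (s : Set V) :
    Submodule.span Λ (Submodule.span Λ₀ s : Set V) = Submodule.span Λ s := by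
  refine (Submodule.span_le.mpr fun x hx => ?_).antisymm (Submodule.span_mono Submodule.subset_span)
  induction hx using Submodule.span_induction with
  | mem x hx => exact Submodule.subset_span hx
  | zero => exact Submodule.zero_mem _
  | add x y _ _ hx hy => exact Submodule.add_mem _ hx hy
  | smul a x _ hx => exact Submodule.smul_mem _ (⟨a, hle a.2⟩ : Λ) hx

variable [Module E V] [IsScalarTower E B V]

theorem IsFull.exists_smul_mem_span [IsDomain E] (hΛ₀ : IsFull E (Λ₀ : Set B)) {s : Set V} {x : V}
    (hx : x ∈ Submodule.span Λ s) : ∃ e : E, e ≠ 0 ∧ e • x ∈ Submodule.span Λ₀ s := by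
  induction hx using Submodule.closure_induction with
  | zero => exact ⟨1, one_ne_zero, by simp⟩
  | add x y _ _ hx hy =>
    obtain ⟨e, he, hex⟩ := hx
    obtain ⟨e', he', hey⟩ := hy
    refine ⟨e * e', mul_ne_zero he he', ?_⟩
    rw [smul_add]
    refine Submodule.add_mem _ ?_ ?_
    · rw [mul_comm, mul_smul]
      exact Submodule.smul_of_tower_mem _ e' hex
    · rw [mul_smul]
      exact Submodule.smul_of_tower_mem _ e hey
  | smul_mem a x hx =>
    obtain ⟨e, he, hea⟩ := hΛ₀ a
    refine ⟨e, he, ?_⟩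
    have hsmul : e • a • x = (⟨e • a, hea⟩ : Λ₀) • x := (smul_assoc e (a : B) x).symm
    rw [hsmul]
    exact Submodule.smul_mem _ _ (Submodule.subset_span hx)

theorem IsFull.exists_linearEquiv_eq [IsDomain E] [IsTorsionFree E V] (hΛ₀ : IsFull E (Λ₀ : Set B))
    (g : V ≃ₗ[Λ₀] V) : ∃ g' : V ≃ₗ[Λ] V, ∀ v, g' v = g v := by
  refine ⟨g.toAddEquiv.toLinearEquiv fun a v => ?_, fun v => rfl⟩
  obtain ⟨e, he, hea⟩ := hΛ₀ a
  refine smul_right_injective V he ?_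
  have hsmul : ∀ w : V, e • a • w = (⟨e • a, hea⟩ : Λ₀) • w := fun w =>
    (smul_assoc e (a : B) w).symm
  have hge : ∀ w : V, g (e • w) = e • g w := (g : V →ₗ[Λ₀] V).map_smul_of_tower e
  change e • g (a • v) = e • a • g v
  rw [← hge, hsmul, hsmul, map_smul]

variable [IsDomain E] [Algebra E R] [Module R V] [IsScalarTower E R V] [IsScalarTower R B V]

theorem IsFullLattice.exists_span_eq
    (hdvd : ∀ r : R, r ≠ 0 → ∃ e : E, e ≠ 0 ∧ r ∣ algebraMap E R e) (hle : (Λ₀ : Set B) ⊆ Λ)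
    (hΛ₀ : IsFull E (Λ₀ : Set B)) {J : Submodule Λ V} (hJ : IsFullLattice R J) :
    ∃ M : Submodule Λ₀ V, IsFullLattice E M ∧ Submodule.span Λ (M : Set V) = J := by
  obtain ⟨⟨s, rfl⟩, hfull⟩ := hJ
  refine ⟨Submodule.span Λ₀ s, ⟨⟨s, rfl⟩, fun v => ?_⟩, span_span_of_subset hle _⟩
  obtain ⟨e, he, hev⟩ := IsFull.restrictScalars hdvd
    (M := (Submodule.span Λ (s : Set V)).restrictScalars R) hfull v
  obtain ⟨e', he', hmem⟩ := hΛ₀.exists_smul_mem_span hev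
  exact ⟨e' * e, mul_ne_zero he' he, by rwa [mul_smul]⟩

theorem IsJordanZassenhaus.of_subset [IsTorsionFree E V]
    (hdvd : ∀ r : R, r ≠ 0 → ∃ e : E, e ≠ 0 ∧ r ∣ algebraMap E R e) (hle : (Λ₀ : Set B) ⊆ Λ)
    (hΛ₀ : IsFull E (Λ₀ : Set B)) (hV : IsJordanZassenhaus E Λ₀ V) :
    IsJordanZassenhaus R Λ V := by
  obtain ⟨S, hS, hrep⟩ := hV
  refine ⟨(fun M : Submodule Λ₀ V => Submodule.span Λ (M : Set V)) '' S, hS.image _, fun J hJ => ?_⟩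
  obtain ⟨M, hM, rfl⟩ := hJ.exists_span_eq hdvd hle hΛ₀
  obtain ⟨g, hg⟩ := hrep M hM
  obtain ⟨g', hg'⟩ := hΛ₀.exists_linearEquiv_eq (Λ := Λ) g
  refine ⟨g', _, hg, ?_⟩
  rw [Submodule.map_span]
  exact congrArg (Submodule.span Λ) (Set.image_congr fun v _ => (hg' v).symm)

theorem exists_subalgebra_le_finite_isFull [IsNoetherianRing E] [IsTorsionFree E B]
    {Λ : Subalgebra E B} (hΛ : IsFull E (Λ : Set B)) {W : Submodule E B} (hW : W.FG)
    (hWfull : IsFull E (W : Set B)) :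
    ∃ Λ₀ ≤ Λ, Module.Finite E Λ₀ ∧ IsFull E (Λ₀ : Set B) := by
  obtain ⟨e, he, heW⟩ := hWfull 1
  have hinj : Function.Injective fun d : B => d • e • (1 : B) := fun d d' h => by
    refine smul_right_injective B he ?_
    simpa using h
  have hfg : (multipliers B W W).FG := fg_multipliers hW heW hinj
  have := isNoetherian_of_fg_of_noetherian _ hfg
  have hfg' : (Subalgebra.toSubmodule (Λ ⊓ multiplierOrder B W)).FG :=
    isNoetherian_submodule.mp this _ fun _ hd => hd.2
  exact ⟨Λ ⊓ multiplierOrder B W, inf_le_left, Module.Finite.iff_fg.mpr hfg',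
    IsFull.inf (M := Subalgebra.toSubmodule Λ) hΛ (isFull_multipliers hW hWfull)⟩

end Descent

section FractionFields

open Module

theorem exists_dvd_algebraMap_of_isAlgebraic {E R : Type*} (K : Type*) [CommRing E] [CommRing R]
    [IsDomain R] [Ring K] [Algebra R K] [FaithfulSMul R K] [Algebra E R] [Algebra E K]
    [IsScalarTower E R K] [Algebra.IsAlgebraic E K] {r : R} (hr : r ≠ 0) :
    ∃ e : E, e ≠ 0 ∧ r ∣ algebraMap E R e :=
  ((isAlgebraic_algebraMap_iff (FaithfulSMul.algebraMap_injective R K)).mp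
    (Algebra.IsAlgebraic.isAlgebraic (R := E) (algebraMap R K r))).exists_nonzero_dvd
      (mem_nonZeroDivisors_of_ne_zero hr)

theorem IsJordanZassenhaus.of_isFractionRing (E F : Type*) {R K B V : Type*} [EuclideanDomain E]
    [Infinite E] [Ring.HasFiniteQuotients E] {abv : AbsoluteValue E ℤ} (adm : abv.IsAdmissible)
    [Field F] [Algebra E F] [IsFractionRing E F] [CommRing R] [IsDomain R] [Field K] [Algebra R K]
    [IsFractionRing R K] [Algebra F K] [FiniteDimensional F K] [Algebra E R] [Algebra E K]
    [IsScalarTower E R K] [IsScalarTower E F K] [Ring B] [IsSemisimpleRing B] [Algebra K B]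
    [Module.Finite K B] [Algebra R B] [IsScalarTower R K B] [AddCommGroup V] [Module B V]
    [Module.Finite B V] [Module R V] [IsScalarTower R B V]
    {Λ : Subalgebra R B} (hΛ : Submodule.span K (Λ : Set B) = ⊤) : IsJordanZassenhaus R Λ V := by
  let : Algebra E B := Algebra.compHom B (algebraMap E R)
  let : Algebra F B := Algebra.compHom B (algebraMap F K)
  let : Module E V := Module.compHom V (algebraMap E R)
  have : IsScalarTower E R B := .of_algebraMap_eq fun _ => rfl
  have : IsScalarTower E R V := ⟨fun e r v => by rw [Algebra.smul_def, mul_smul]; rfl⟩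
  have : IsScalarTower E B V := ⟨fun e b v => by
    rw [← algebraMap_smul R e b, smul_assoc, algebraMap_smul]⟩
  have : IsScalarTower E K B := .of_algebraMap_eq fun e => by
    rw [IsScalarTower.algebraMap_apply E R B, IsScalarTower.algebraMap_apply R K B,
      ← IsScalarTower.algebraMap_apply E R K]
  have : IsScalarTower F K B := .of_algebraMap_eq fun _ => rfl
  have : IsScalarTower E F B := .of_algebraMap_eq fun e => by
    rw [IsScalarTower.algebraMap_apply E K B, IsScalarTower.algebraMap_apply E F K,
      ← IsScalarTower.algebraMap_apply F K B]
  have : Module.Finite F B := .trans K B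
  have hu : ∀ e : E, e ≠ 0 → IsUnit (algebraMap E B e) := fun e he => by
    rw [IsScalarTower.algebraMap_apply E F B]
    exact (IsUnit.mk0 _ (by simpa using he)).map _
  have : IsTorsionFree E V := isTorsionFree_of_isUnit_algebraMap hu
  have : IsTorsionFree E B := isTorsionFree_of_isUnit_algebraMap hu
  have : Algebra.IsAlgebraic E F := IsLocalization.isAlgebraic F (nonZeroDivisors E)
  have : Algebra.IsAlgebraic E K := .trans E F K
  have : FaithfulSMul R K :=
    (faithfulSMul_iff_algebraMap_injective R K).mpr (IsFractionRing.injective R K)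
  have hdvd : ∀ r : R, r ≠ 0 → ∃ e : E, e ≠ 0 ∧ r ∣ algebraMap E R e :=
    fun r => exists_dvd_algebraMap_of_isAlgebraic K
  have hΛfull : IsFull R (Λ : Set B) :=
    isFull_of_span_eq_top (F := K) (M := Subalgebra.toSubmodule Λ) hΛ
  obtain ⟨W, hW, hWfull⟩ := exists_fg_isFull E F B
  obtain ⟨Λ₀, hle, _, hΛ₀⟩ := exists_subalgebra_le_finite_isFull (Λ := Λ.restrictScalars E)
    (IsFull.restrictScalars hdvd (M := Subalgebra.toSubmodule Λ) hΛfull) hW hWfull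
  exact (IsJordanZassenhaus.of_isSemisimpleRing adm hu hΛ₀).of_subset hdvd hle hΛ₀

end FractionFields

/-! ### Semisimplicity of separable algebras -/

section Semisimple

variable {K L A : Type*} [CommRing K] [CommRing L] [Algebra K L] [Ring A] [Algebra K A]

theorem baseChange_pow_le (N : Submodule K A) (n : ℕ) :
    N.baseChange L ^ n ≤ (N ^ n).baseChange L := by
  rw [Submodule.baseChange_eq_span, Submodule.baseChange_eq_span, Submodule.span_pow]
  refine Submodule.span_mono ?_
  have himage := Set.image_pow (Algebra.TensorProduct.includeRight : A →ₐ[K] L ⊗[K] A) (N : Set A) n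
  exact himage.symm.subset.trans (Set.image_mono N.pow_subset_pow)

theorem mul_one_tmul_mem_baseChange {I : Ideal A} {x : A} (hx : x ∈ I) (y : L ⊗[K] A) :
    y * (1 ⊗ₜ[K] x) ∈ (I.restrictScalars K).baseChange L := by
  induction y with
  | zero => simp
  | tmul l a =>
    rw [Algebra.TensorProduct.tmul_mul_tmul]
    exact Submodule.tmul_mem_baseChange_of_mem _ (I.mul_mem_left a hx)
  | add y z hy hz =>
    rw [add_mul]
    exact Submodule.add_mem _ hy hz

theorem isSemisimpleRing_of_tensorProduct (K L : Type*) {A : Type*} [Field K] [Field L]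
    [Algebra K L] [Ring A] [Algebra K A] [FiniteDimensional K A] [IsSemisimpleRing (L ⊗[K] A)] :
    IsSemisimpleRing A := by
  have : IsArtinianRing A := IsArtinianRing.of_finite K A
  rw [IsArtinianRing.isSemisimpleRing_iff_jacobson, eq_bot_iff]
  intro x hx
  obtain ⟨n, hn⟩ := IsSemiprimaryRing.isNilpotent (R := A)
  obtain ⟨f, hf, hspan⟩ := IsSemisimpleRing.ideal_eq_span_idempotent (Ideal.span {(1 : L) ⊗ₜ[K] x})
  have hfJ : f ∈ ((Ring.jacobson A).restrictScalars K).baseChange L := by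
    obtain ⟨y, rfl⟩ := Ideal.mem_span_singleton'.mp (hspan ▸ Ideal.mem_span_singleton_self f)
    exact mul_one_tmul_mem_baseChange hx y
  have hf0 : f = 0 := by
    have hpow := baseChange_pow_le _ _ (Submodule.pow_mem_pow _ hfJ (n + 1))
    rw [hf.pow_succ_eq, ← Submodule.restrictScalars_pow n.succ_ne_zero, Submodule.pow_succ,
      hn, zero_mul] at hpow
    simpa using hpow
  have hx0 : (1 : L) ⊗ₜ[K] x = 0 := by
    rwa [hf0, Ideal.span_singleton_zero, Ideal.span_singleton_eq_bot] at hspan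
  exact Algebra.TensorProduct.includeRight_injective (algebraMap K L).injective
    (hx0.trans (TensorProduct.tmul_zero A 1).symm)

theorem IsSeparableAlgebra.isSemisimpleRing {K A : Type*} [Field K] [Ring A] [Algebra K A]
    [FiniteDimensional K A] (hA : IsSeparableAlgebra K A) : IsSemisimpleRing A :=
  have : IsSemisimpleRing (AlgebraicClosure K ⊗[K] A) := hA
  isSemisimpleRing_of_tensorProduct K (AlgebraicClosure K)

end Semisimple

/-! ### Global fields -/

section Adjoin

open scoped Polynomial IntermediateField

theorem hasFiniteQuotients_polynomial (k : Type*) [Field k] [Finite k] :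
    Ring.HasFiniteQuotients k[X] where
  finiteQuotient {I} hI := by
    obtain ⟨f, rfl⟩ := (IsPrincipalIdealRing.principal I).principal
    have hf : f ≠ 0 := fun hf0 => hI (by simp [hf0])
    have : Module.Finite k (AdjoinRoot f) := (AdjoinRoot.powerBasis hf).finite
    exact (Module.finite_of_finite k : Finite (AdjoinRoot f))

theorem isFractionRing_polynomial_adjoin {k K : Type*} [Field k] [Field K] [Algebra k K] {x : K}
    (hx : Transcendental k x) [Algebra k[X] k⟮x⟯]
    (hmap : ∀ q : k[X], algebraMap k[X] k⟮x⟯ q =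
      Polynomial.aeval (IntermediateField.AdjoinSimple.gen k x) q) :
    IsFractionRing k[X] k⟮x⟯ :=
  IsLocalization.isLocalization_of_algEquiv (nonZeroDivisors k[X])
    (AlgEquiv.ofRingEquiv (f := (RatFunc.algEquivOfTranscendental x hx).toRingEquiv) fun q =>
      (RatFunc.algEquivOfTranscendental_algebraMap x hx q).trans (hmap q).symm)

variable {k K : Type*} [Field k] [Field K] [Algebra k K]

theorem closure_singleton_le_adjoin (t : K) : Subfield.closure {t} ≤ k⟮t⟯.toSubfield :=
  Subfield.closure_le.mpr (IntermediateField.subset_adjoin k {t})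

theorem finite_adjoin_of_finite_closure {t : K} [Module.Finite (Subfield.closure {t}) K] :
    Module.Finite k⟮t⟯ K := by
  let : Algebra (Subfield.closure {t}) k⟮t⟯ :=
    (Subfield.inclusion (closure_singleton_le_adjoin t)).toAlgebra
  have : IsScalarTower (Subfield.closure {t}) k⟮t⟯ K := .of_algebraMap_eq fun _ => rfl
  exact .of_restrictScalars_finite (Subfield.closure {t}) k⟮t⟯ K

open scoped IntermediateField.algebraAdjoinAdjoin in
theorem isAlgebraic_adjoin_of_transcendental {t x : K} [Algebra.IsAlgebraic k⟮t⟯ K]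
    (hx : Transcendental k x) : Algebra.IsAlgebraic k⟮x⟯ K := by
  have : Algebra.IsAlgebraic (Algebra.adjoin k {t}) K := .trans _ k⟮t⟯ _
  have htrdeg : Algebra.trdeg k K ≤ 1 := by
    simpa using Algebra.IsAlgebraic.trdeg_le_cardinalMk k ({t} : Set K)
  have hbasis : IsTranscendenceBasis k fun _ : Unit => x :=
    (algebraicIndependent_unique_type_iff.mpr hx).isTranscendenceBasis_of_lift_trdeg_le_of_finite
      (by simpa using htrdeg)
  have halg := hbasis.isAlgebraic_field
  rwa [Set.range_const] at halg

theorem finite_adjoin_of_transcendental {t x : K} [Module.Finite (Subfield.closure {t}) K]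
    (hx : Transcendental k x) : Module.Finite k⟮x⟯ K := by
  have : Module.Finite k⟮t⟯ K := finite_adjoin_of_finite_closure
  have : Algebra.IsAlgebraic k⟮x⟯ K := isAlgebraic_adjoin_of_transcendental (t := t) hx
  have : Module.Finite k⟮x⟯⟮t⟯ K := finite_adjoin_of_finite_closure
  have : Module.Finite k⟮x⟯ k⟮x⟯⟮t⟯ :=
    IntermediateField.adjoin.finiteDimensional (Algebra.IsIntegral.isIntegral t)
  exact .trans k⟮x⟯⟮t⟯ K

theorem transcendental_of_infinite_closure [Finite k] {t : K}
    [hinf : Infinite (Subfield.closure {t})] : Transcendental k t := by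
  intro ht
  have := IntermediateField.adjoin.finiteDimensional ht.isIntegral
  have : Finite k⟮t⟯ := Module.finite_of_finite k
  have hfin := Set.Finite.subset (Set.toFinite (k⟮t⟯ : Set K)) (closure_singleton_le_adjoin t)
  exact hinf.not_finite hfin

theorem exists_transcendental_algebraMap (R : Type*) [CommRing R] [Algebra R K]
    [IsFractionRing R K] {t : K} (ht : Transcendental k t) :
    ∃ r : R, Transcendental k (algebraMap R K r) := by
  by_contra! hall
  simp only [Transcendental, not_not] at hall
  obtain ⟨r, s, -, rfl⟩ := IsFractionRing.div_surjective (A := R) t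
  rw [div_eq_mul_inv] at ht
  exact ht ((hall r).mul (hall s).inv)

end Adjoin

section GlobalFields

open scoped Polynomial IntermediateField

theorem IsJordanZassenhaus.of_numberField {R K B V : Type*} [CommRing R] [IsDomain R] [Field K]
    [NumberField K] [Algebra R K] [IsFractionRing R K] [Ring B] [IsSemisimpleRing B] [Algebra K B]
    [Module.Finite K B] [Algebra R B] [IsScalarTower R K B] [AddCommGroup V] [Module B V]
    [Module.Finite B V] [Module R V] [IsScalarTower R B V]
    {Λ : Subalgebra R B} (hΛ : Submodule.span K (Λ : Set B) = ⊤) : IsJordanZassenhaus R Λ V :=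
  .of_isFractionRing ℤ ℚ AbsoluteValue.absIsAdmissible hΛ

theorem IsJordanZassenhaus.of_transcendental {k R K B V : Type*} [Field k] [Finite k] [CommRing R]
    [IsDomain R] [Field K] [Algebra k R] [Algebra k K] [Algebra R K] [IsScalarTower k R K]
    [IsFractionRing R K] [Ring B] [IsSemisimpleRing B] [Algebra K B] [Module.Finite K B]
    [Algebra R B] [IsScalarTower R K B] [AddCommGroup V] [Module B V] [Module.Finite B V]
    [Module R V] [IsScalarTower R B V] {x : R} (hx : Transcendental k (algebraMap R K x))
    [Module.Finite k⟮algebraMap R K x⟯ K]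
    {Λ : Subalgebra R B} (hΛ : Submodule.span K (Λ : Set B) = ⊤) : IsJordanZassenhaus R Λ V := by
  let F := k⟮algebraMap R K x⟯
  let gen : F := IntermediateField.AdjoinSimple.gen k (algebraMap R K x)
  let : Algebra k[X] R := (Polynomial.aeval x).toAlgebra
  let : Algebra k[X] K := (Polynomial.aeval (algebraMap R K x)).toAlgebra
  let : Algebra k[X] F := (Polynomial.aeval gen).toAlgebra
  have : IsScalarTower k[X] R K :=
    .of_algebraMap_eq fun q => Polynomial.aeval_algebraMap_apply K x q
  have : IsScalarTower k[X] F K :=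
    .of_algebraMap_eq fun q => Polynomial.aeval_algebraMap_apply K gen q
  have : IsFractionRing k[X] F := isFractionRing_polynomial_adjoin hx fun _ => rfl
  have : Ring.HasFiniteQuotients k[X] := hasFiniteQuotients_polynomial k
  have : Fintype k := Fintype.ofFinite k
  classical
  exact .of_isFractionRing k[X] F Polynomial.cardPowDegreeIsAdmissible hΛ

theorem IsJordanZassenhaus.of_isGlobalField {R K B V : Type*} [CommRing R]
    [IsDomain R] [Field K] [Algebra R K] [IsFractionRing R K] [Ring B] [IsSemisimpleRing B]
    [Algebra K B] [FiniteDimensional K B] [Algebra R B] [IsScalarTower R K B] [AddCommGroup V]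
    [Module B V] [Module.Finite B V] [Module R V] [IsScalarTower R B V] (hK : IsGlobalField K)
    {Λ : Subalgebra R B} (hΛ : Submodule.span K (Λ : Set B) = ⊤) : IsJordanZassenhaus R Λ V := by
  obtain _ | ⟨p, t, hp, _, _, _, -⟩ := hK
  · exact .of_numberField hΛ
  · have : Fact p.Prime := ⟨hp⟩
    have : CharP R p := (algebraMap R K).charP (IsFractionRing.injective R K) p
    let : Algebra (ZMod p) R := ZMod.algebra R p
    let : Algebra (ZMod p) K := ZMod.algebra K p
    have : IsScalarTower (ZMod p) R K := .of_algebraMap_eq' (Subsingleton.elim _ _)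
    have ht : Transcendental (ZMod p) t := transcendental_of_infinite_closure
    obtain ⟨x, hx⟩ := exists_transcendental_algebraMap R ht
    have : Module.Finite (ZMod p)⟮algebraMap R K x⟯ K := finite_adjoin_of_transcendental (t := t) hx
    exact .of_transcendental hx hΛ

end GlobalFields

/-! ### Locally free ideals -/

section OppositeOrder

theorem mem_sumLat_singleton {R A : Type*} [CommRing R] [Ring A] [Algebra R A] {J : Submodule R A}
    {z : Fin 1 → A} : z ∈ sumLat ![J] ↔ z 0 ∈ J := by
  simp [sumLat, AddSubgroup.mem_pi]

theorem span_op_eq_top {R K A : Type*} [CommRing R] [Field K] [Ring A] [Algebra K A] [Algebra R A]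
    {Λ : Subalgebra R A} (hΛ : Submodule.span K (Λ : Set A) = ⊤) :
    Submodule.span K (Λ.op : Set Aᵐᵒᵖ) = ⊤ := by
  have hmap := congrArg (Submodule.map (MulOpposite.opLinearEquiv K).toLinearMap) hΛ
  rw [Submodule.map_span, Submodule.map_top, LinearEquiv.range] at hmap
  rw [← hmap, Subalgebra.coe_op]
  exact congrArg _ (MulOpposite.opEquiv.image_eq_preimage_symm _).symm

instance finite_mulOpposite_self (A : Type*) [Ring A] : Module.Finite Aᵐᵒᵖ A :=
  .of_surjective (LinearMap.toSpanSingleton Aᵐᵒᵖ A 1) fun a => ⟨.op a, one_mul a⟩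

variable {R K A : Type*} [CommRing R] [IsDedekindDomain R] [Field K] [Algebra R K]
  [IsFractionRing R K] [Ring A] [Algebra K A] [Algebra R A] {Λ : Subalgebra R A}

/-- The lattice underlying a right `Λ`-ideal, as a submodule of `A` over the opposite order. -/
def LocallyFreeIdeal.toSubmoduleOp (I : LocallyFreeIdeal R K A Λ) : Submodule Λ.op A where
  __ := I.carrier
  smul_mem' a x hx := I.right_mul x hx a.1.unop a.2

theorem LocallyFreeIdeal.isFullLattice_toSubmoduleOp [IsScalarTower R K A]
    (I : LocallyFreeIdeal R K A Λ) :
    IsFullLattice R I.toSubmoduleOp :=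
  ⟨.of_restrictScalars (S := I.toSubmoduleOp) R I.fg,
    isFull_of_span_eq_top (F := K) (M := I.carrier) I.spans⟩

theorem idealIso_of_map_toSubmoduleOp_eq {I I' : LocallyFreeIdeal R K A Λ} (g : A ≃ₗ[Λ.op] A)
    (hg : I.toSubmoduleOp.map (g : A →ₗ[Λ.op] A) = I'.toSubmoduleOp) : IdealIso Λ I I' := by
  have hmem : ∀ x, g x ∈ I'.carrier ↔ x ∈ I.carrier := fun x => by
    change g x ∈ I'.toSubmoduleOp ↔ x ∈ I.toSubmoduleOp
    rw [← hg]
    exact g.injective.mem_set_image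
  let G : (Fin 1 → A) ≃+ (Fin 1 → A) := .piCongrRight fun _ => g.toAddEquiv
  have hG : (sumLat ![I.carrier]).map G.toAddMonoidHom = sumLat ![I'.carrier] := by
    ext z
    rw [AddSubgroup.mem_map_equiv, mem_sumLat_singleton, mem_sumLat_singleton, ← hmem]
    exact iff_of_eq (congrArg (· ∈ I'.carrier) (g.apply_symm_apply (z 0)))
  refine ⟨(G.addSubgroupMap _).trans (.addSubgroupCongr hG), fun z a ha _ => funext fun i => ?_⟩
  exact g.map_smul (⟨.op a, ha⟩ : Λ.op) (z.1 i)

theorem finite_quot_idealIso_of_isJordanZassenhaus [IsScalarTower R K A]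
    (h : IsJordanZassenhaus R Λ.op A) :
    Finite (Quot (IdealIso (K := K) Λ)) :=
  h.finite_quot LocallyFreeIdeal.toSubmoduleOp LocallyFreeIdeal.isFullLattice_toSubmoduleOp
    fun _ _ => idealIso_of_map_toSubmoduleOp_eq

theorem finite_isomorphism_classes_of_locallyFreeIdeals_general [FiniteDimensional K A]
    [IsSemisimpleRing A] [IsScalarTower R K A] (hK : IsGlobalField K) (Λ : Subalgebra R A)
    (hΛ : Submodule.span K (Λ : Set A) = ⊤) : Finite (Quot (IdealIso (K := K) Λ)) :=
  finite_quot_idealIso_of_isJordanZassenhaus (.of_isGlobalField hK (span_op_eq_top hΛ))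

end OppositeOrder

noncomputable section

/-- **Finiteness of `LF₁(Λ)` (Jordan–Zassenhaus).**
Let `K` be a global field and `R` the ring of `S`-integers of `K` for a finite set `S` of
places containing all archimedean ones (equivalently, `R` is a Dedekind domain with fraction
field `K` which is finitely generated as a ring).  Let `A` be a finite-dimensional separable
`K`-algebra and `Λ` an `R`-order in `A`.  Then the set `LF₁(Λ)` of isomorphism classes of
locally free right `Λ`-ideals in `A` is finite. -/
theorem finite_isomorphism_classes_of_locallyFreeIdeals
    {R K A : Type*} [CommRing R] [IsDedekindDomain R] [Field K] [Algebra R K]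
    [IsFractionRing R K] [Ring A] [Algebra K A] [FiniteDimensional K A]
    [Algebra R A] [IsScalarTower R K A]
    (hK : IsGlobalField K) (hR : Algebra.FiniteType ℤ R)
    (hA : IsSeparableAlgebra K A)
    (Λ : Subalgebra R A) (hΛ : IsROrder R K A Λ) :
    Finite (Quot (IdealIso (R := R) (K := K) (A := A) Λ)) := by
  have : IsSemisimpleRing A := hA.isSemisimpleRing
  exact finite_isomorphism_classes_of_locallyFreeIdeals_general hK Λ hΛ.2

end
end
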